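/- Let r ≥ 2 be an integer and let ε > 0. There exists a constant C = C(r, ε) such that the following holds. Let p be a prime, let K, M, N be real numbers with 1 < K, M, N < p and N > 4·p^{1/r}, let a, b be integers with p ∤ ab, let χ be a non-trivial multiplicative character modulo p, let α = (α_m) be complex numbers with |α_m| ≤ 1 for all m, and let β = (β_{k,n}) be arbitrary complex numbers. Then |∑_{1 ≤ k ≤ K} ∑_{1 ≤ m ≤ M} ∑_{1 ≤ n ≤ N} α_m · β_{k,n} · χ(a·k + b·m·n)| ≤ C · p^ε · ‖β‖₂ · M·(N·K)^{1/2} · Δ₂, where ‖β‖₂ = (∑_{1 ≤ k ≤ K} ∑_{1 ≤ n ≤ N} |β_{k,n}|²)^{1/2} and Δ₂ = (1 + K/M²)^{1/(4r)} · (1 + (|a|·K + |b|·M·N)·M·N·p^{-1-1/r})^{1/(2r)} · (p^{1+1/r}/(K·M²·N²))^{1/(4r)} + M^{-1/2}. -/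

import Mathlib

open Finset
set_option linter.all false



section Stepanov
open Polynomial

theorem st_dvd {F : Type*} [Field F] (f : F[X]) (N : ℕ) :
    ∀ a, f ^ (N - a) ∣ hasseDeriv a (f ^ N) := by
  induction N with
  | zero => intro a; simp
  | succ N ih =>
    intro a
    rw [pow_succ, hasseDeriv_mul]
    refine Finset.dvd_sum fun ij hij => ?_
    rw [Finset.HasAntidiagonal.mem_antidiagonal] at hij
    rcases Nat.eq_zero_or_pos ij.2 with h | h
    · have h1 : ij.1 = a := by omega
      rw [h, hasseDeriv_zero, LinearMap.id_apply, h1]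
      have h2 : f ^ (N + 1 - a) ∣ f ^ (N - a) * f := by
        rw [← pow_succ]; exact pow_dvd_pow _ (by omega)
      exact h2.trans (mul_dvd_mul_right (ih a) f)
    · exact ((pow_dvd_pow f (by omega)).trans (ih ij.1)).mul_right _

theorem st_u {F : Type*} [Field F] (f : F[X]) (hf : f ≠ 0) (D : ℕ) (hD : f.natDegree ≤ D) (N a : ℕ) :
    ∃ u : F[X], u.natDegree ≤ a * D ∧ hasseDeriv a (f ^ N) = f ^ (N - a) * u := by
  obtain ⟨u, hu⟩ := st_dvd f N a
  refine ⟨u, ?_, hu⟩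
  by_cases hu0 : u = 0
  · simp [hu0]
  have h1 := natDegree_hasseDeriv_le (f ^ N) a
  rw [hu, natDegree_mul (pow_ne_zero _ hf) hu0, natDegree_pow, natDegree_pow] at h1
  have h2 : a * f.natDegree ≤ a * D := Nat.mul_le_mul_left _ hD
  rcases le_total a N with h | h
  · obtain ⟨c, rfl⟩ := Nat.exists_eq_add_of_le h
    rw [Nat.add_sub_cancel_left, add_mul] at h1
    omega
  · have : N * f.natDegree ≤ a * f.natDegree := Nat.mul_le_mul_right _ h
    omega

/-- the linear reduced derivative -/
theorem st_s {F : Type*} [Field F] (f : F[X]) (hf : f ≠ 0) (D : ℕ) (hD : f.natDegree ≤ D) (N k : ℕ) (hk : k ≤ N) :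
    ∃ s : F[X] →ₗ[F] F[X], (∀ r, (s r).natDegree ≤ k * D + r.natDegree) ∧
      ∀ r, hasseDeriv k (f ^ N * r) = f ^ (N - k) * s r := by
  choose u hu1 hu2 using st_u f hf D hD N
  refine ⟨∑ ab ∈ Finset.HasAntidiagonal.antidiagonal k,
    (LinearMap.mulLeft F (f ^ ab.2 * u ab.1)) ∘ₗ (hasseDeriv ab.2), ?_, ?_⟩
  · intro r
    simp only [LinearMap.sum_apply, LinearMap.comp_apply, LinearMap.mulLeft_apply]
    refine natDegree_sum_le_of_forall_le _ _ fun ab hab => ?_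
    rw [Finset.HasAntidiagonal.mem_antidiagonal] at hab
    refine natDegree_mul_le.trans ?_
    have h1 := natDegree_hasseDeriv_le r ab.2
    have h2 : (f ^ ab.2 * u ab.1).natDegree ≤ ab.2 * D + ab.1 * D := by
      refine natDegree_mul_le.trans (add_le_add ?_ (hu1 _))
      exact natDegree_pow_le.trans (Nat.mul_le_mul_left _ hD)
    rw [← hab, add_mul]
    omega
  · intro r
    simp only [LinearMap.sum_apply, LinearMap.comp_apply, LinearMap.mulLeft_apply]
    rw [hasseDeriv_mul, Finset.mul_sum]
    refine Finset.sum_congr rfl fun ab hab => ?_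
    rw [Finset.HasAntidiagonal.mem_antidiagonal] at hab
    rw [hu2, show N - ab.1 = (N - k) + ab.2 by omega, pow_add]
    ring

theorem st_nonzero {F : Type*} [Field F] (f f2 : F[X]) (hf2 : f = X * f2) (h0 : f2.eval 0 ≠ 0)
    (A d Q q : ℕ) (hq : q = d * Q + 1) (r : Fin A × Fin d → F[X]) (hr : ∀ i, (r i).degree < Q)
    (hr0 : r ≠ 0) : ∑ ij, r ij * f ^ ((ij.2 : ℕ) * Q) * X ^ ((ij.1 : ℕ) * q) ≠ 0 := by
  classical
  intro hsum
  obtain ⟨i1, hi1⟩ := Function.ne_iff.mp hr0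
  let w : Fin A × Fin d → ℕ := fun ij => (ij.1 : ℕ) * q + (ij.2 : ℕ) * Q
  obtain ⟨m, hm, hmin⟩ := Finset.exists_min_image (Finset.univ.filter fun ij => r ij ≠ 0) w
    ⟨i1, by simpa using hi1⟩
  simp only [Finset.mem_filter, Finset.mem_univ, true_and] at hm hmin
  have hgap : ∀ ij, ij ≠ m → w m ≤ w ij → w m + Q ≤ w ij := by
    rintro ⟨i, j⟩ hne hle
    obtain ⟨mi, mj⟩ := m
    simp only [w] at hle ⊢
    subst hq
    rcases lt_trichotomy (i : ℕ) mi with h | h | h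
    · exfalso
      obtain ⟨c, hc⟩ := Nat.exists_eq_add_of_lt h
      have := j.2
      have h3 : (j : ℕ) * Q ≤ d * Q := Nat.mul_le_mul_right _ this.le
      rw [hc] at hle
      nlinarith [Nat.zero_le (c * (d * Q + 1)), Nat.zero_le ((mj:ℕ) * Q)]
    · rw [h] at hle ⊢
      have hle' : (mj : ℕ) * Q ≤ j * Q := by omega
      have hne2 : (mj : ℕ) ≠ j := by
        intro h4; apply hne; ext <;> simp [h, h4]
      rcases Nat.lt_or_gt_of_ne hne2 with h5 | h5
      · have : ((mj : ℕ) + 1) * Q ≤ j * Q := Nat.mul_le_mul_right _ h5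
        linarith
      · have : ((j : ℕ) + 1) * Q ≤ mj * Q := Nat.mul_le_mul_right _ h5
        have : Q = 0 := by linarith
        subst this; simp
    · have := mj.2
      have h3 : ((mj : ℕ) + 1) * Q ≤ d * Q := Nat.mul_le_mul_right _ this
      have h4 : ((mi : ℕ) + 1) * (d * Q + 1) ≤ i * (d * Q + 1) := Nat.mul_le_mul_right _ h
      nlinarith [Nat.zero_le ((j:ℕ) * Q)]
  have hterm : ∀ ij, r ij * f ^ ((ij.2 : ℕ) * Q) * X ^ ((ij.1 : ℕ) * q) =
      X ^ (w ij) * (r ij * f2 ^ ((ij.2 : ℕ) * Q)) := by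
    intro ij
    simp only [w]
    rw [hf2, mul_pow, pow_add]; ring
  have hdiv : X ^ (w m + Q) ∣ X ^ (w m) * (r m * f2 ^ ((m.2 : ℕ) * Q)) := by
    rw [← Finset.add_sum_erase _ _ (Finset.mem_univ m), hterm] at hsum
    rw [eq_neg_of_add_eq_zero_left hsum]
    rw [dvd_neg]
    refine Finset.dvd_sum fun ij hij => ?_
    rw [hterm]
    by_cases h : r ij = 0
    · simp [h]
    · exact (pow_dvd_pow X (hgap ij (Finset.ne_of_mem_erase hij) (hmin ij h))).mul_right _
  rw [pow_add] at hdiv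
  have hdiv2 := (mul_dvd_mul_iff_left (pow_ne_zero _ X_ne_zero)).mp hdiv
  have hcop : IsCoprime (X ^ Q : F[X]) (f2 ^ ((m.2 : ℕ) * Q)) := by
    refine IsCoprime.pow ?_
    refine (irreducible_X.coprime_iff_not_dvd).mpr ?_
    rw [X_dvd_iff, coeff_zero_eq_eval_zero]; exact h0
  have h5 : (X ^ Q : F[X]) ∣ r m := hcop.dvd_of_dvd_mul_right hdiv2
  have h6 := eq_zero_of_dvd_of_degree_lt h5 (by rw [degree_X_pow]; exact hr m)
  exact hm h6

theorem st_X_pow {F : Type*} [Field F] [Fintype F] (x : F) (i : ℕ) :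
    (X - C x) ^ (Fintype.card F) ∣ (X ^ (i * Fintype.card F) - C (x ^ i) : F[X]) := by
  obtain ⟨p, hp⟩ := CharP.exists F
  obtain ⟨n, hpp, hn⟩ := FiniteField.card F p
  haveI : Fact p.Prime := ⟨hpp⟩
  have h1 : (X - C x : F[X]) ^ Fintype.card F = X ^ Fintype.card F - C x := by
    conv_lhs => rw [hn]
    rw [sub_pow_char_pow, ← hn, ← C_pow, FiniteField.pow_card]
  rw [h1, mul_comm, pow_mul, C_pow]
  exact sub_dvd_pow_sub_pow _ _ _

theorem st_main {F : Type*} [Field F] [Fintype F] [DecidableEq F] (f f2 : F[X]) (hf2 : f = X * f2)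
    (h0 : f2.eval 0 ≠ 0) (D : ℕ) (hD : f.natDegree ≤ D) (A d Q l : ℕ) (hd : 0 < d) (hA : 0 < A)
    (hq : Fintype.card F = d * Q + 1)
    (hl : l ≤ Fintype.card F) (hlin : l * (Q + A + l * D) < A * d * Q) (z : F) :
    (Finset.univ.filter fun x : F => (f.eval x) ^ Q = z).card * l ≤
      A * Fintype.card F + l * D + Fintype.card F * D := by
  set q := Fintype.card F with hqdef
  have hf : f ≠ 0 := by
    rw [hf2]; refine mul_ne_zero X_ne_zero ?_
    rintro rfl; simp at h0
  set M := Q + A + l * D with hM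
  have hex : ∀ (k : Fin l) (j : Fin d), ∃ s : F[X] →ₗ[F] F[X],
      (∀ r, (s r).natDegree ≤ k * D + r.natDegree) ∧
      ∀ r, hasseDeriv k (f ^ (l + j * Q) * r) = f ^ (l + j * Q - k) * s r :=
    fun k j => st_s f hf D hD _ _ (by have := k.2; omega)
  choose s hs1 hs2 using hex
  -- polynomials
  let P : (Fin A × Fin d → Fin Q → F) → Fin A × Fin d → F[X] := fun v ij => ofFn Q (v ij)
  let G : Fin l → (Fin A × Fin d → Fin Q → F) →ₗ[F] F[X] := fun k =>
    ∑ ij : Fin A × Fin d, (LinearMap.mulLeft F (C (z ^ (ij.2 : ℕ)) * X ^ (ij.1 : ℕ))) ∘ₗ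
      (s k ij.2) ∘ₗ (ofFn Q) ∘ₗ (LinearMap.proj ij)
  let Φ : (Fin A × Fin d → Fin Q → F) →ₗ[F] (Fin l → Fin M → F) :=
    LinearMap.pi fun k => (toFn M) ∘ₗ (G k)
  have hker : LinearMap.ker Φ ≠ ⊥ := by
    apply LinearMap.ker_ne_bot_of_finrank_lt
    simp only [Module.finrank_pi_fintype, Module.finrank_self, Finset.sum_const, Finset.card_univ,
      Fintype.card_fin, Fintype.card_prod, smul_eq_mul, mul_one, Module.finrank_fintype_fun_eq_card]
    exact hlin
  obtain ⟨v, hv, hv0⟩ := (Submodule.ne_bot_iff _).mp hker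
  have hrdeg : ∀ ij, (P v ij).degree < Q := fun ij => ofFn_degree_lt _
  have hG : ∀ k, G k v = 0 := by
    intro k
    have h1 : toFn M (G k v) = 0 := by
      have := congrFun (LinearMap.mem_ker.mp hv) k
      simpa [Φ] using this
    have hdeg : (G k v).degree < M := by
      simp only [G, LinearMap.sum_apply, LinearMap.comp_apply, LinearMap.mulLeft_apply,
        LinearMap.proj_apply]
      refine (degree_sum_le _ _).trans_lt ?_
      rw [Finset.sup_lt_iff (by exact WithBot.bot_lt_coe _)]
      intro ij _
      by_cases hz : C (z ^ (ij.2 : ℕ)) * X ^ (ij.1 : ℕ) * (s k ij.2) ((ofFn Q) (v ij)) = 0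
      · rw [hz, degree_zero]; exact WithBot.bot_lt_coe _
      rw [degree_eq_natDegree hz]
      norm_cast
      have hofn : (ofFn Q (v ij)) ≠ 0 := by
        intro h; rw [h] at hz; simp at hz
      have a1 : (ofFn Q (v ij)).natDegree < Q := by
        have := hrdeg ij
        simp only [P] at this
        rwa [degree_eq_natDegree hofn, Nat.cast_lt] at this
      have a2 := hs1 k ij.2 (ofFn Q (v ij))
      have a3 : (C (z ^ (ij.2 : ℕ)) * X ^ (ij.1 : ℕ) : F[X]).natDegree ≤ ij.1 :=
        natDegree_C_mul_X_pow_le _ _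
      have a4 := natDegree_mul_le (p := C (z ^ (ij.2 : ℕ)) * X ^ (ij.1 : ℕ))
        (q := (s k ij.2) ((ofFn Q) (v ij)))
      have a5 : (k : ℕ) * D ≤ l * D := Nat.mul_le_mul_right _ k.2.le
      have := ij.1.2
      omega
    ext n
    rw [coeff_zero]
    by_cases hn : n < M
    · have := congrFun h1 ⟨n, hn⟩
      simpa [toFn] using this
    · exact coeff_eq_zero_of_degree_lt (hdeg.trans_le (by exact_mod_cast not_lt.mp hn))
  let R : F[X] := ∑ ij, f ^ (l + (ij.2 : ℕ) * Q) * P v ij * X ^ ((ij.1 : ℕ) * q)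
  have hR0 : R ≠ 0 := by
    have h1 : R = f ^ l * ∑ ij, P v ij * f ^ ((ij.2 : ℕ) * Q) * X ^ ((ij.1 : ℕ) * q) := by
      simp only [R]
      rw [Finset.mul_sum]
      refine Finset.sum_congr rfl fun ij _ => ?_
      rw [pow_add]; ring
    rw [h1]
    refine mul_ne_zero (pow_ne_zero _ hf) (st_nonzero f f2 hf2 h0 A d Q q hq (P v) hrdeg ?_)
    intro h
    apply hv0
    funext ij
    have := congrFun h ij
    simp only [P, Pi.zero_apply] at this
    exact (injective_ofFn Q) (by simpa using this)
  have hvan : ∀ x : F, (f.eval x) ^ Q = z → (X - C x) ^ l ∣ R := by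
    intro x hx
    let Rx : F[X] := ∑ ij, f ^ (l + (ij.2 : ℕ) * Q) * P v ij * C (x ^ (ij.1 : ℕ))
    have h1 : (X - C x) ^ l ∣ R - Rx := by
      simp only [R, Rx]
      rw [← Finset.sum_sub_distrib]
      refine Finset.dvd_sum fun ij _ => ?_
      rw [← mul_sub]
      exact ((pow_dvd_pow _ hl).trans (st_X_pow x ij.1)).mul_left _
    have h2 : (X - C x) ^ l ∣ Rx := by
      have h3 : X ^ l ∣ taylor x Rx := by
        rw [X_pow_dvd_iff]
        intro k hk
        rw [taylor_coeff]
        have h4 : (G ⟨k, hk⟩ v).eval x = 0 := by rw [hG]; simp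
        have h5 : (hasseDeriv k Rx).eval x = (f.eval x) ^ (l - k) * (G ⟨k, hk⟩ v).eval x := by
          simp only [Rx, G, map_sum, eval_finsetSum, LinearMap.sum_apply, LinearMap.comp_apply,
            LinearMap.mulLeft_apply, LinearMap.proj_apply, Finset.mul_sum]
          refine Finset.sum_congr rfl fun ij _ => ?_
          rw [mul_comm, ← smul_eq_C_mul, LinearMap.map_smul, eval_smul]
          have := hs2 ⟨k, hk⟩ ij.2 (P v ij)
          simp only at this
          rw [this]
          simp only [eval_mul, eval_pow, eval_C, eval_X, smul_eq_mul, P]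
          rw [show l + (ij.2 : ℕ) * Q - k = (l - k) + Q * ij.2 by rw [mul_comm]; omega, pow_add,
            pow_mul, hx]
          ring
        rw [h5, h4, mul_zero]
      obtain ⟨t, ht⟩ := h3
      refine ⟨taylor (-x) t, ?_⟩
      have h4 := congrArg (taylor (-x)) ht
      rw [taylor_taylor, neg_add_cancel, taylor_zero, taylor_mul, taylor_X_pow] at h4
      rw [h4]; simp [sub_eq_add_neg]
    have := dvd_add h1 h2
    simpa using this
  have hprod : ∏ x ∈ Finset.univ.filter (fun x : F => (f.eval x) ^ Q = z), (X - C x) ^ l ∣ R := by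
    refine Finset.prod_dvd_of_coprime ?_ ?_
    · intro x _ y _ hxy
      exact IsCoprime.pow (isCoprime_X_sub_C_of_isUnit_sub (sub_ne_zero.mpr hxy).isUnit)
    · intro x hx
      exact hvan x (by simpa using hx)
  have hdeg := natDegree_le_of_dvd hprod hR0
  rw [natDegree_prod_of_monic _ _ (fun x _ => (monic_X_sub_C x).pow l)] at hdeg
  simp only [natDegree_pow, natDegree_X_sub_C, mul_one, Finset.sum_const, smul_eq_mul] at hdeg
  refine hdeg.trans ?_
  simp only [R]
  refine natDegree_sum_le_of_forall_le _ _ fun ij _ => ?_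
  refine natDegree_mul_le.trans ?_
  rw [natDegree_X_pow]
  have b1 : (f ^ (l + (ij.2 : ℕ) * Q) * P v ij).natDegree ≤ (l + (ij.2 : ℕ) * Q) * D + Q := by
    refine natDegree_mul_le.trans (add_le_add ?_ ?_)
    · exact natDegree_pow_le.trans (Nat.mul_le_mul_left _ hD)
    · by_cases h : P v ij = 0
      · simp [h]
      · have := hrdeg ij
        rw [degree_eq_natDegree h, Nat.cast_lt] at this
        exact this.le
  have b2 : (ij.2 : ℕ) * Q ≤ q := by
    have : (ij.2 : ℕ) * Q ≤ d * Q := Nat.mul_le_mul_right _ ij.2.2.le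
    omega
  have b3 : (ij.2 : ℕ) * Q * D ≤ q * D := Nat.mul_le_mul_right _ b2
  have b4 : ((ij.1 : ℕ) + 1) * q ≤ A * q := Nat.mul_le_mul_right _ ij.1.2
  have b5 : Q ≤ q := by nlinarith
  nlinarith
end Stepanov

section
open Polynomial

set_option maxHeartbeats 1000000 in
theorem st_bound (d D : ℕ) (hd : 0 < d) : ∃ Cc : ℝ, 0 ≤ Cc ∧ ∀ (F : Type) [Field F] [Fintype F] [DecidableEq F]
    (f f2 : F[X]) (hf2 : f = X * f2) (h0 : f2.eval 0 ≠ 0) (hD : f.natDegree ≤ D) (Q : ℕ)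
    (hq : Fintype.card F = d * Q + 1) (z : F),
    ((Finset.univ.filter fun x : F => (f.eval x) ^ Q = z).card : ℝ) ≤
      (Fintype.card F : ℝ) / d + Cc * √(Fintype.card F : ℝ) := by
  set δ := 2 * d ^ 2 * (1 + d * D) + 1 with hδ
  set A0 := 2 * δ + d with hA0
  refine ⟨4 * (d * D + δ) + D + A0 + 1, by positivity, ?_⟩
  intro F _ _ _ f f2 hf2 h0 hD Q hq z
  set q := Fintype.card F with hqd
  set S := (Finset.univ.filter fun x : F => (f.eval x) ^ Q = z) with hS
  have hq2 : 2 ≤ q := Fintype.one_lt_card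
  have hqpos : (0 : ℝ) < q := by positivity
  set A := Nat.sqrt q with hA
  have hA1 : A * A ≤ q := Nat.sqrt_le q
  have hA2 : q < (A + 1) * (A + 1) := Nat.lt_succ_sqrt q
  have hsq := Real.sq_sqrt hqpos.le
  have hs1 : 1 ≤ √(q : ℝ) := by
    rw [Real.one_le_sqrt]; exact_mod_cast (by omega : 1 ≤ q)
  have hAle : (A : ℝ) ≤ √(q : ℝ) := by
    apply Real.le_sqrt_of_sq_le; rw [sq]; exact_mod_cast hA1
  have hAge : √(q : ℝ) ≤ A + 1 := by
    rw [Real.sqrt_le_left (by positivity), sq]; exact_mod_cast hA2.le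
  by_cases hcase : A < A0
  · have h1 : (S.card : ℝ) ≤ q := by
      exact_mod_cast Finset.card_le_univ S
    have h2 : √(q : ℝ) ≤ A0 := by
      have : (A : ℝ) + 1 ≤ A0 := by exact_mod_cast hcase
      linarith
    have h3 : (q : ℝ) ≤ A0 * √(q : ℝ) := by nlinarith
    have h4 : (0 : ℝ) ≤ q / d := by positivity
    have h5 : (0 : ℝ) ≤ (4 * (d * D + δ) + D + 1) * √(q : ℝ) := by positivity
    nlinarith
  · push Not at hcase
    have hdA : 2 * δ ≤ d * A := by nlinarith
    obtain ⟨l, hl⟩ := Nat.exists_eq_add_of_le (show δ ≤ d * A by omega)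
    have hlq : l ≤ q := by
      have : d * A ≤ A * A := Nat.mul_le_mul_right _ (by omega)
      omega
    have hApos : 0 < A := by omega
    have hlin : l * (Q + A + l * D) < A * d * Q := by
      have e1 : A * d * Q = (δ + l) * Q := by rw [← hl]; ring
      have e2 : l ≤ d * A := by omega
      have e3 : l * (A + l * D) ≤ d * A * (A + d * A * D) := by gcongr
      have e4 : d * A * (A + d * A * D) = d * (1 + d * D) * (A * A) := by ring
      have e5 : d * (1 + d * D) * (A * A) ≤ d * (1 + d * D) * q := by gcongr
      have e6 : d * (1 + d * D) * q < δ * Q := by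
        have e7 : q ≤ 2 * (d * Q) := by omega
        have e8 : d * (d * (1 + d * D) * q) < d * (δ * Q) := by
          have : d * (d * (1 + d * D) * q) ≤ d ^ 2 * (1 + d * D) * (2 * (d * Q)) := by
            calc d * (d * (1 + d * D) * q) = d ^ 2 * (1 + d * D) * q := by ring
              _ ≤ _ := by gcongr
          have e9 : 0 < d * Q := by omega
          calc _ ≤ _ := this
            _ = 2 * d ^ 2 * (1 + d * D) * (d * Q) := by ring
            _ < (2 * d ^ 2 * (1 + d * D) + 1) * (d * Q) := by
              rw [add_mul]; omega
            _ = d * (δ * Q) := by rw [hδ]; ring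
        exact Nat.lt_of_mul_lt_mul_left e8
      calc l * (Q + A + l * D) = l * Q + l * (A + l * D) := by ring
        _ < l * Q + δ * Q := by omega
        _ = A * d * Q := by rw [e1]; ring
    have hmain := st_main f f2 hf2 h0 D hD A d Q l hd hApos hq hlq hlin z
    rw [← hqd, ← hS] at hmain
    have hm : (S.card : ℝ) * l ≤ A * q + l * D + q * D := by exact_mod_cast hmain
    have hlR : (d : ℝ) * A = δ + l := by exact_mod_cast hl
    have hdAR : 2 * (δ : ℝ) ≤ d * A := by exact_mod_cast hdA
    have hd1 : (1 : ℝ) ≤ d := by exact_mod_cast hd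
    have hA1R : (1 : ℝ) ≤ A := by exact_mod_cast hApos
    have hlge : (d : ℝ) * √(q : ℝ) ≤ 4 * l := by nlinarith
    have hlpos : (0 : ℝ) < l := by nlinarith
    have hX : (0 : ℝ) ≤ d * D + δ := by positivity
    have key : (q : ℝ) * (d * D + δ) ≤ 4 * (d * D + δ) * √(q : ℝ) * (d * l) := by
      have : (q : ℝ) ≤ 4 * √(q : ℝ) * (d * l) := by
        have h7 : √(q:ℝ) * √(q:ℝ) = q := Real.mul_self_sqrt hqpos.le
        have h8 : √(q : ℝ) ≤ 4 * l := by nlinarith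
        have h9 : √(q : ℝ) ≤ 4 * l * d := by nlinarith
        nlinarith
      nlinarith
    have h10 : (S.card : ℝ) ≤ q / d + 4 * (d * D + δ) * √(q : ℝ) + D := by
      rw [← sub_le_iff_le_add, ← sub_le_iff_le_add']
      rw [← mul_le_mul_iff_left₀ (show (0 : ℝ) < d * l by positivity)]
      refine le_trans ?_ key
      have h11 : (q : ℝ) / d * (d * l) = q * l := by field_simp
      have : (d : ℝ) * (S.card * l) ≤ d * (A * q + l * D + q * D) := by gcongr
      have h12 : (d : ℝ) * A * q = (δ + l) * q := by rw [hlR]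
      nlinarith
    have : (D : ℝ) ≤ D * √(q : ℝ) := le_mul_of_one_le_right (by positivity) hs1
    have : 0 ≤ ((A0 : ℝ) + 1) * √(q : ℝ) := by positivity
    nlinarith

end

section
open Polynomial

theorem st_char (p : ℕ) [Fact p.Prime] (χ : MulChar (ZMod p) ℂ) (hχ : χ ≠ 1)
    (f f2 : (ZMod p)[X]) (hf2 : f = X * f2) (h0 : f2.eval 0 ≠ 0) :
    ∃ Cc : ℝ, 0 ≤ Cc ∧ ∀ (F : Type) [Field F] [Fintype F] [Algebra (ZMod p) F],
      ‖∑ x : F, χ (Algebra.norm (ZMod p) (aeval x f))‖ ≤ Cc * √(Fintype.card F : ℝ) := by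
  classical
  have hp2 : 2 ≤ p := (Fact.out : p.Prime).two_le
  obtain ⟨C, hC0, hC⟩ := st_bound (p - 1) f.natDegree (by omega)
  refine ⟨(p - 1 : ℕ) * C + f.natDegree, by positivity, ?_⟩
  intro F _ _ _
  set q := Fintype.card F with hq
  have hqpos : 1 ≤ q := Fintype.card_pos
  have hs1 : 1 ≤ √(q : ℝ) := by
    rw [Real.one_le_sqrt]; exact_mod_cast hqpos
  have hdvd : (p - 1) ∣ q - 1 := by
    have : q = p ^ (Module.finrank (ZMod p) F) := by
      rw [hq, Module.card_eq_pow_finrank (K := ZMod p) (V := F), ZMod.card]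
    rw [this]
    simpa using Nat.sub_dvd_pow_sub_pow p 1 (Module.finrank (ZMod p) F)
  obtain ⟨Q, hQ⟩ := hdvd
  have hQ' : q = (p - 1) * Q + 1 := by omega
  have hQQ : (q - 1) / (p - 1) = Q := by rw [hQ]; exact Nat.mul_div_cancel_left _ (by omega)
  have hnorm : ∀ y : F, algebraMap (ZMod p) F (Algebra.norm (ZMod p) y) = y ^ Q := by
    intro y
    rw [FiniteField.algebraMap_norm_eq_pow, Nat.card_eq_fintype_card, Nat.card_eq_fintype_card,
      ZMod.card, ← hq, hQQ]
  let Nn : ZMod p → ℕ := fun z => (Finset.univ.filter fun x : F => Algebra.norm (ZMod p) (aeval x f) = z).card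
  have hinj := (algebraMap (ZMod p) F).injective
  have hN : ∀ z, (Nn z : ℝ) ≤ (q : ℝ) / (p - 1 : ℕ) + C * √(q : ℝ) := by
    intro z
    have := hC F (f.map (algebraMap _ F)) (f2.map (algebraMap _ F)) (by rw [hf2]; simp)
      (by rw [show (0 : F) = algebraMap (ZMod p) F 0 by simp, eval_map_algebraMap, aeval_algebraMap_apply]
          intro h
          replace h := hinj h
          exact h0 (by simpa [coe_aeval_eq_eval] using h)) (by simp) Q hQ'
      (algebraMap _ F z)
    refine le_trans (le_of_eq ?_) this
    simp only [Nn]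
    congr 2
    ext x
    simp only [Finset.mem_filter, Finset.mem_univ, true_and]
    rw [← hinj.eq_iff, hnorm, eval_map_algebraMap]
  have hsum : ∑ z, Nn z = q := by
    simp only [Nn]
    rw [← Finset.card_eq_sum_card_fiberwise (fun _ _ => Finset.mem_coe.mpr (Finset.mem_univ _))]
    rfl
  have hf0 : f ≠ 0 := by
    rw [hf2]; refine mul_ne_zero X_ne_zero ?_
    rintro rfl; simp at h0
  have hN0 : (Nn 0 : ℝ) ≤ f.natDegree := by
    have h1 : Nn 0 ≤ (f.map (algebraMap _ F)).natDegree := by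
      simp only [Nn]
      refine Polynomial.card_le_degree_of_subset_roots (p := f.map (algebraMap _ F)) ?_
      intro x hx
      simp only [Finset.mem_val, Finset.mem_filter, Finset.mem_univ, true_and,
        Algebra.norm_eq_zero_iff] at hx
      rw [mem_roots ((Polynomial.map_ne_zero_iff hinj).mpr hf0), IsRoot, eval_map_algebraMap]
      exact hx
    rw [natDegree_map] at h1
    exact_mod_cast h1
  set B := (q : ℝ) / (p - 1 : ℕ) + C * √(q : ℝ) with hB
  have e1 : ∑ x : F, χ (Algebra.norm (ZMod p) (aeval x f)) = ∑ z, χ z * (Nn z : ℂ) := by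
    rw [← Finset.sum_fiberwise (s := Finset.univ) (g := fun x : F => Algebra.norm (ZMod p) (aeval x f))]
    refine Finset.sum_congr rfl fun z _ => ?_
    rw [Finset.sum_congr rfl (g := fun _ => χ z)]
    · simp [Nn, mul_comm]
    · intro x hx
      simp at hx; rw [hx]
  have e2 : ∑ z, χ z * (Nn z : ℂ) = ∑ z, χ z * ((Nn z : ℂ) - (B : ℂ)) := by
    simp only [mul_sub, Finset.sum_sub_distrib]
    rw [← Finset.sum_mul, MulChar.sum_eq_zero_of_ne_one hχ]; simp
  rw [e1, e2, ← Finset.add_sum_erase _ _ (Finset.mem_univ 0)]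
  have hχ0 : χ 0 = 0 := MulChar.map_nonunit _ (by simp)
  rw [hχ0, zero_mul, zero_add]
  refine (norm_sum_le _ _).trans ?_
  have e3 : ∀ z ∈ Finset.univ.erase (0 : ZMod p), ‖χ z * ((Nn z : ℂ) - (B : ℂ))‖ ≤ B - Nn z := by
    intro z hz
    rw [norm_mul]
    have h1 : ‖χ z‖ ≤ 1 := DirichletCharacter.norm_le_one χ z
    have h2 : ‖((Nn z : ℂ) - (B : ℂ))‖ = B - Nn z := by
      rw [← Complex.ofReal_natCast, ← Complex.ofReal_sub, Complex.norm_real, Real.norm_eq_abs,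
        abs_of_nonpos (by linarith [hN z])]
      ring
    rw [h2]
    have : 0 ≤ B - Nn z := by linarith [hN z]
    nlinarith
  refine (Finset.sum_le_sum e3).trans ?_
  rw [Finset.sum_sub_distrib, Finset.sum_const, Finset.card_erase_of_mem (Finset.mem_univ _),
    Finset.card_univ, ZMod.card, nsmul_eq_mul]
  have e4 : ∑ z ∈ Finset.univ.erase (0 : ZMod p), (Nn z : ℝ) = q - Nn 0 := by
    have : (∑ z, (Nn z : ℝ)) = q := by exact_mod_cast hsum
    rw [← this, ← Finset.add_sum_erase _ _ (Finset.mem_univ (0 : ZMod p))]; ring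
  rw [e4, hB]
  have hpp : ((p - 1 : ℕ) : ℝ) ≠ 0 := by
    have : 0 < p - 1 := by omega
    positivity
  have : ((p - 1 : ℕ) : ℝ) * ((q : ℝ) / (p - 1 : ℕ)) = q := by field_simp
  have h9 : (f.natDegree : ℝ) ≤ f.natDegree * √(q : ℝ) := le_mul_of_one_le_right (by positivity) hs1
  nlinarith

end

section
open Polynomial

noncomputable def monP (p n : ℕ) [Fact p.Prime] : Finset (ZMod p)[X] :=
  letI := Classical.decEq (ZMod p)[X]
  (Finset.univ : Finset (Fin n → ZMod p)).image (fun v => X ^ n + ofFn n v)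

theorem mem_monP {p n : ℕ} [Fact p.Prime] (g : (ZMod p)[X]) :
    g ∈ monP p n ↔ g.Monic ∧ g.natDegree = n := by
  classical
  unfold monP
  simp only [Finset.mem_image, Finset.mem_univ, true_and]
  constructor
  · rintro ⟨v, rfl⟩
    refine ⟨monic_X_pow_add (ofFn_degree_lt v), natDegree_eq_of_degree_eq_some ?_⟩
    rw [degree_add_eq_left_of_degree_lt, degree_X_pow]
    rw [degree_X_pow]; exact ofFn_degree_lt v
  · rintro ⟨hm, hn⟩
    have hlt : (g - X ^ n).degree < (n : WithBot ℕ) := by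
      have h1 : g.degree = n := by rw [degree_eq_natDegree hm.ne_zero, hn]
      have := degree_sub_lt (p := g) (q := X ^ n) (by rw [degree_X_pow, h1]) hm.ne_zero
        (by rw [hm.leadingCoeff, leadingCoeff_X_pow])
      rwa [h1] at this
    refine ⟨toFn n (g - X ^ n), ?_⟩
    have : ofFn n (toFn n (g - X ^ n)) = g - X ^ n := by
      ext i
      by_cases h : i < n
      · simp [h, toFn]
      · rw [ofFn_coeff_eq_zero_of_ge _ (not_lt.mp h), coeff_eq_zero_of_degree_lt]
        exact hlt.trans_le (by exact_mod_cast not_lt.mp h)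
    rw [this]
    ring

/-- characteristic polynomial -/
noncomputable def cpoly (p j : ℕ) [Fact p.Prime] (x : GaloisField p j) : (ZMod p)[X] :=
  (minpoly (ZMod p) x) ^ (j / (minpoly (ZMod p) x).natDegree)

noncomputable instance (p j : ℕ) [Fact p.Prime] : Fintype (GaloisField p j) := Fintype.ofFinite _

theorem minpoly_deg_dvd (p j : ℕ) [Fact p.Prime] (hj : j ≠ 0) (x : GaloisField p j) :
    (minpoly (ZMod p) x).natDegree ∣ j := by
  have h1 := minpoly.degree_dvd (K := ZMod p) (L := GaloisField p j) (x := x) (Algebra.IsIntegral.isIntegral x)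
  rwa [GaloisField.finrank p hj] at h1

theorem cpoly_monic (p j : ℕ) [Fact p.Prime] (x : GaloisField p j) : (cpoly p j x).Monic :=
  (minpoly.monic (Algebra.IsIntegral.isIntegral x)).pow _

theorem cpoly_natDegree (p j : ℕ) [Fact p.Prime] (hj : j ≠ 0) (x : GaloisField p j) :
    (cpoly p j x).natDegree = j := by
  unfold cpoly
  rw [natDegree_pow]
  exact Nat.div_mul_cancel (minpoly_deg_dvd p j hj x)

open IntermediateField in
theorem norm_sub_eq (p j : ℕ) [Fact p.Prime] (hj : j ≠ 0) (x : GaloisField p j) (c : ZMod p) :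
    Algebra.norm (ZMod p) (algebraMap _ (GaloisField p j) c - x) = (cpoly p j x).eval c := by
  have hint : IsIntegral (ZMod p) x := Algebra.IsIntegral.isIntegral x
  let pb := adjoin.powerBasis hint
  have hgen : pb.gen = AdjoinSimple.gen (ZMod p) x := rfl
  have h1 : Algebra.norm (ZMod p) (algebraMap (ZMod p) _ c - AdjoinSimple.gen (ZMod p) x) =
      (minpoly (ZMod p) x).eval c := by
    rw [Algebra.norm_eq_matrix_det pb.basis, map_sub, ← hgen, AlgHom.commutes]
    have := charpoly_leftMulMatrix pb
    rw [hgen, minpoly_gen] at this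
    rw [← this, Matrix.eval_charpoly]
    rfl
  have h2 : algebraMap (ZMod p) (GaloisField p j) c - x =
      algebraMap (ZMod p)⟮x⟯ (GaloisField p j) (algebraMap (ZMod p) _ c - AdjoinSimple.gen (ZMod p) x) := by
    rw [map_sub, AdjoinSimple.algebraMap_gen, ← IsScalarTower.algebraMap_apply]
  have h3 : Module.finrank (ZMod p)⟮x⟯ (GaloisField p j) = j / (minpoly (ZMod p) x).natDegree := by
    have := Module.finrank_mul_finrank (ZMod p) (ZMod p)⟮x⟯ (GaloisField p j)
    rw [GaloisField.finrank p hj, adjoin.finrank hint] at this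
    exact (Nat.div_eq_of_eq_mul_right (minpoly.natDegree_pos hint) this.symm).symm
  rw [h2, ← Algebra.norm_norm (S := (ZMod p)⟮x⟯), Algebra.norm_algebraMap, map_pow, h1, h3]
  unfold cpoly
  rw [eval_pow]

theorem root_count (p j : ℕ) [Fact p.Prime] (hj : j ≠ 0) (P : (ZMod p)[X]) (hP : Irreducible P)
    (hm : P.Monic) (hd : P.natDegree ∣ j) [DecidableEq (ZMod p)[X]] :
    (Finset.univ.filter fun x : GaloisField p j => minpoly (ZMod p) x = P).card = P.natDegree := by
  have h1 : P ∣ X ^ (Nat.card (ZMod p)) ^ j - X := (hP.natDegree_dvd_iff_dvd_X_pow_card_pow_sub_X).mp hd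
  have hsp : ((X ^ (p ^ j) - X : (ZMod p)[X]).map (algebraMap (ZMod p) (GaloisField p j))).Splits :=
    SplittingField.splits (X ^ (p ^ j) - X : (ZMod p)[X])
  rw [Nat.card_eq_fintype_card, ZMod.card] at h1
  have hne : (X ^ (p ^ j) - X : (ZMod p)[X]).map (algebraMap (ZMod p) (GaloisField p j)) ≠ 0 := by
    rw [Polynomial.map_ne_zero_iff (algebraMap (ZMod p) (GaloisField p j)).injective]
    exact FiniteField.X_pow_card_pow_sub_X_ne_zero _ hj (Fact.out : p.Prime).one_lt
  have hs : (P.map (algebraMap (ZMod p) (GaloisField p j))).Splits :=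
    hsp.of_dvd hne (Polynomial.map_dvd _ h1)
  have h2 := card_rootSet_eq_natDegree (K := GaloisField p j) (PerfectField.separable_of_irreducible hP) hs
  rw [← h2, ← Nat.card_eq_fintype_card, Nat.card_coe_set_eq, ← Set.ncard_coe_finset]
  congr 1
  ext x
  simp only [Finset.coe_filter, Finset.mem_univ, true_and, Set.mem_setOf_eq, mem_rootSet]
  constructor
  · rintro h; exact ⟨hP.ne_zero, by rw [← h]; exact minpoly.aeval _ _⟩
  · rintro ⟨_, h⟩; exact (minpoly.eq_of_irreducible_of_monic hP h hm).symm

end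

section
open Polynomial

open Classical in
theorem cpoly_count_step (p j : ℕ) [Fact p.Prime] (hj : j ≠ 0) (P g : (ZMod p)[X])
    (hP : Irreducible P) (hm : P.Monic) (hg : g ≠ 0) :
    (Finset.univ.filter fun x : GaloisField p j => cpoly p j x ∣ P * g).card =
    (Finset.univ.filter fun x : GaloisField p j => cpoly p j x ∣ g).card +
      if j = P.natDegree * (multiplicity P g + 1) then P.natDegree else 0 := by
  have hfin : FiniteMultiplicity P g := FiniteMultiplicity.of_prime_left hP.prime hg
  have hdeg : 0 < P.natDegree := hP.natDegree_pos
  have key : (Finset.univ.filter fun x : GaloisField p j => cpoly p j x ∣ P * g) =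
      (Finset.univ.filter fun x : GaloisField p j => cpoly p j x ∣ g) ∪
      (Finset.univ.filter fun x : GaloisField p j => minpoly (ZMod p) x = P ∧
        j = P.natDegree * (multiplicity P g + 1)) := by
    ext x
    simp only [Finset.mem_union, Finset.mem_filter, Finset.mem_univ, true_and]
    by_cases hx : minpoly (ZMod p) x = P
    · have hd := minpoly_deg_dvd p j hj x
      unfold cpoly
      rw [hx] at hd ⊢
      obtain ⟨e, rfl⟩ := hd
      rw [Nat.mul_div_cancel_left _ hdeg, hfin.pow_dvd_iff_le_multiplicity]
      have he : e ≠ 0 := by rintro rfl; simp at hj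
      obtain ⟨e, rfl⟩ := Nat.exists_eq_succ_of_ne_zero he
      rw [Nat.succ_eq_add_one, pow_succ', mul_dvd_mul_iff_left hP.ne_zero,
        hfin.pow_dvd_iff_le_multiplicity, Nat.mul_right_inj hdeg.ne']
      simp only [true_and]
      omega
    · simp only [hx, false_and, or_false]
      refine ⟨fun h => ?_, fun h => h.mul_left _⟩
      have hQ : Irreducible (minpoly (ZMod p) x) := minpoly.irreducible (Algebra.IsIntegral.isIntegral x)
      have hcop : IsCoprime (minpoly (ZMod p) x) P := by
        rw [hQ.coprime_iff_not_dvd]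
        intro hdv
        exact hx (eq_of_monic_of_associated (minpoly.monic (Algebra.IsIntegral.isIntegral x)) hm
          (hQ.associated_of_dvd hP hdv))
      exact (hcop.pow_left).dvd_of_dvd_mul_left h
  rw [key, Finset.card_union_of_disjoint]
  · congr 1
    split_ifs with h
    · refine Eq.trans ?_ (root_count p j hj P hP hm (h ▸ dvd_mul_right _ _))
      congr 1
      ext x; simp [← h]
    · simp [h]
  · rw [Finset.disjoint_left]
    intro x
    simp only [Finset.mem_filter, Finset.mem_univ, true_and, not_and]
    intro h1 h2 h3
    unfold cpoly at h1
    rw [h2] at h1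
    have : j / P.natDegree = multiplicity P g + 1 := by
      rw [h3, Nat.mul_div_cancel_left _ hdeg]
    rw [this, hfin.pow_dvd_iff_le_multiplicity] at h1
    omega

open Classical in
theorem cpoly_count (p J : ℕ) [Fact p.Prime] (g : (ZMod p)[X]) (hg : g ≠ 0) (hJ : g.natDegree ≤ J) :
    ∑ j ∈ Finset.Icc 1 J, (Finset.univ.filter fun x : GaloisField p j => cpoly p j x ∣ g).card
      = g.natDegree := by
  induction g using UniqueFactorizationMonoid.induction_on_prime with
  | h₁ => exact absurd rfl hg
  | h₂ u hu =>
    rw [natDegree_eq_zero_of_isUnit hu]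
    apply Finset.sum_eq_zero
    intro j hj
    have hj0 : j ≠ 0 := by have := Finset.mem_Icc.mp hj; omega
    rw [Finset.card_eq_zero, Finset.filter_eq_empty_iff]
    intro x _ h
    have := natDegree_eq_zero_of_isUnit (isUnit_of_dvd_unit h hu)
    rw [cpoly_natDegree p j hj0] at this
    exact hj0 this
  | h₃ g P0 hg0 hP0 ih =>
    have hP0i := hP0.irreducible
    set P := normalize P0 with hPdef
    have hPi : Irreducible P := (normalize_associated P0).symm.irreducible hP0i
    have hm : P.Monic := monic_normalize hP0.ne_zero
    have hassoc : Associated (P0 * g) (P * g) := ((normalize_associated P0).symm).mul_right g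
    have hdv : ∀ j (x : GaloisField p j), cpoly p j x ∣ P0 * g ↔ cpoly p j x ∣ P * g :=
      fun j x => hassoc.dvd_iff_dvd_right
    have hdeg : (P0 * g).natDegree = P.natDegree + g.natDegree := by
      rw [natDegree_mul hP0.ne_zero hg0, hPdef]
      congr 1
      exact natDegree_eq_of_degree_eq (degree_eq_degree_of_associated (normalize_associated P0).symm)
    simp only [hdv]
    have hfin : FiniteMultiplicity P g := FiniteMultiplicity.of_prime_left hPi.prime hg0
    rw [Finset.sum_congr rfl (fun j hj => cpoly_count_step p j
      (by have := Finset.mem_Icc.mp hj; omega) P g hPi hm hg0), Finset.sum_add_distrib,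
      ih hg0 (by omega), Finset.sum_ite_eq', if_pos, hdeg, add_comm]
    rw [Finset.mem_Icc]
    have hpos := hPi.natDegree_pos
    refine ⟨Nat.mul_pos hpos (Nat.succ_pos _), ?_⟩
    have h1 : P ^ (multiplicity P g + 1) ∣ P * g := by
      rw [pow_succ']; exact mul_dvd_mul_left _ (pow_multiplicity_dvd P g)
    have h2 := natDegree_le_of_dvd h1 (mul_ne_zero hPi.ne_zero hg0)
    rw [natDegree_pow, natDegree_mul hPi.ne_zero hg0] at h2
    rw [mul_comm]; omega

theorem newton_rec (p : ℕ) [Fact p.Prime] (Λ : (ZMod p)[X] →* ℂ) (n : ℕ) :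
    (n : ℂ) * ∑ g ∈ monP p n, Λ g = ∑ j ∈ Finset.Icc 1 n,
      (∑ x : GaloisField p j, Λ (cpoly p j x)) * ∑ g ∈ monP p (n - j), Λ g := by
  classical
  have h1 : ∀ j ∈ Finset.Icc 1 n, ∀ x : GaloisField p j,
      Λ (cpoly p j x) * ∑ g ∈ monP p (n - j), Λ g =
      ∑ g ∈ (monP p n).filter (fun g => cpoly p j x ∣ g), Λ g := by
    intro j hj x
    have hj' := Finset.mem_Icc.mp hj
    have hj0 : j ≠ 0 := by omega
    rw [Finset.mul_sum]
    have hc := cpoly_monic p j x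
    have hcd := cpoly_natDegree p j hj0 x
    refine Finset.sum_bij (fun g _ => cpoly p j x * g) ?_ ?_ ?_ ?_
    · intro g hg
      rw [mem_monP] at hg
      rw [Finset.mem_filter, mem_monP]
      refine ⟨⟨hc.mul hg.1, ?_⟩, dvd_mul_right _ _⟩
      rw [hc.natDegree_mul hg.1, hcd, hg.2]; omega
    · intro g1 _ g2 _ h
      exact mul_left_cancel₀ hc.ne_zero h
    · intro g hg
      rw [Finset.mem_filter, mem_monP] at hg
      obtain ⟨⟨hm, hd⟩, q, hq⟩ := hg
      have hqm : q.Monic := hc.of_mul_monic_left (hq ▸ hm)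
      refine ⟨q, ?_, hq.symm⟩
      rw [mem_monP]
      refine ⟨hqm, ?_⟩
      rw [hq, hc.natDegree_mul hqm, hcd] at hd
      omega
    · intro g _
      rw [map_mul]
  have h2 : ∀ j ∈ Finset.Icc 1 n, (∑ x : GaloisField p j, Λ (cpoly p j x)) * ∑ g ∈ monP p (n - j), Λ g
      = ∑ g ∈ monP p n, ((Finset.univ.filter fun x : GaloisField p j => cpoly p j x ∣ g).card : ℂ) * Λ g := by
    intro j hj
    rw [Finset.sum_mul, Finset.sum_congr rfl (fun x _ => h1 j hj x)]
    simp_rw [Finset.sum_filter]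
    rw [Finset.sum_comm]
    refine Finset.sum_congr rfl fun g _ => ?_
    rw [← Finset.sum_filter, Finset.sum_const, nsmul_eq_mul]
  rw [Finset.sum_congr rfl h2, Finset.sum_comm, Finset.mul_sum]
  refine Finset.sum_congr rfl fun g hg => ?_
  rw [mem_monP] at hg
  rw [← Finset.sum_mul, ← Nat.cast_sum, cpoly_count p n g hg.1.ne_zero hg.2.le, hg.2]

end

section
open Polynomial

theorem lfun_deriv (c S : ℕ → ℂ) (m : ℕ) (q Cc : ℝ) (hq : 0 < q) (hC : 0 ≤ Cc)
    (hcm : ∀ n, m ≤ n → c n = 0) (hS : ∀ j, 1 ≤ j → ‖S j‖ ≤ Cc * q ^ j)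
    (hrec : ∀ n : ℕ, (n : ℂ) * c n = ∑ j ∈ Finset.Icc 1 n, S j * c (n - j))
    (L : ℂ[X]) (hL : ∀ n, L.coeff n = c n) (ρ : ℝ) (hρ : 0 ≤ ρ) (hρq : ρ * q < 1) (T : ℂ) (hT : ‖T‖ ≤ ρ) :
    ∃ G : ℂ, ‖G‖ ≤ Cc * (1 - ρ * q)⁻¹ ∧ T * L.derivative.eval T = L.eval T * G := by
  classical
  set S' : ℕ → ℂ := fun j => if j = 0 then 0 else S j with hS'
  have hbd : ∀ j, ‖S' j * T ^ j‖ ≤ Cc * (ρ * q) ^ j := by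
    intro j
    by_cases hj : j = 0
    · simp [hS', hj, hC]
    · simp only [hS', hj, if_false, norm_mul, norm_pow]
      rw [mul_pow, mul_comm (ρ ^ j), ← mul_assoc]
      exact mul_le_mul (hS j (Nat.one_le_iff_ne_zero.mpr hj)) (pow_le_pow_left₀ (norm_nonneg _) hT j)
        (by positivity) (by positivity)
  have hgeo : Summable (fun j => Cc * (ρ * q) ^ j) :=
    (summable_geometric_of_lt_one (by positivity) hρq).mul_left _
  have hsum : Summable (fun j => ‖S' j * T ^ j‖) :=
    Summable.of_nonneg_of_le (fun _ => norm_nonneg _) hbd hgeo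
  refine ⟨∑' j, S' j * T ^ j, ?_, ?_⟩
  · refine (norm_tsum_le_tsum_norm hsum).trans ?_
    refine (Summable.tsum_le_tsum hbd hsum hgeo).trans ?_
    rw [tsum_mul_left, tsum_geometric_of_lt_one (by positivity) hρq]
  · have hdeg : L.natDegree < m + 1 := by
      rw [Nat.lt_succ_iff, natDegree_le_iff_coeff_eq_zero]
      intro n hn
      rw [hL]; exact hcm n hn.le
    have hfs : ∀ n ∉ Finset.range (m + 1), c n * T ^ n = 0 := by
      intro n hn
      rw [Finset.mem_range, not_lt] at hn
      rw [hcm n (by omega), zero_mul]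
    have hLe : L.eval T = ∑' n, c n * T ^ n := by
      rw [eval_eq_sum_range' hdeg, tsum_eq_sum hfs]
      simp only [hL]
    have hfs' : Summable (fun n => ‖c n * T ^ n‖) :=
      summable_of_ne_finset_zero (s := Finset.range (m + 1)) (fun n hn => by rw [hfs n hn, norm_zero])
    rw [hLe, tsum_mul_tsum_eq_tsum_sum_antidiagonal_of_summable_norm hfs' hsum]
    have hco : ∀ n, ∑ kl ∈ Finset.HasAntidiagonal.antidiagonal n, c kl.1 * T ^ kl.1 * (S' kl.2 * T ^ kl.2)
        = (n : ℂ) * c n * T ^ n := by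
      intro n
      rw [hrec, Finset.sum_mul]
      rw [← Finset.Nat.sum_antidiagonal_swap, Finset.Nat.sum_antidiagonal_eq_sum_range_succ_mk]
      simp only [Prod.swap]
      rw [Finset.range_eq_Ico, Finset.sum_eq_sum_Ico_succ_bot (Nat.succ_pos n)]
      have h0 : S' 0 = 0 := by simp [hS']
      rw [h0]
      simp only [zero_mul, mul_zero, zero_add]
      have : Finset.Ico 1 n.succ = Finset.Icc 1 n := by ext; simp [Nat.lt_succ_iff]
      rw [this]
      refine Finset.sum_congr rfl fun j hj => ?_
      have hj' := Finset.mem_Icc.mp hj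
      have h1 : S' j = S j := by simp only [hS']; rw [if_neg (by omega)]
      have h2 : T ^ n = T ^ (n - j) * T ^ j := by rw [← pow_add]; congr 1; omega
      rw [h1, h2]; ring
    simp_rw [hco]
    rw [tsum_eq_sum (s := Finset.range (m + 1 + 1))]
    · rw [eval_eq_sum_range' (n := m + 1) (p := L.derivative), Finset.sum_range_succ' _ (m + 1), Finset.mul_sum]
      · simp only [Nat.cast_zero, zero_mul, add_zero]
        refine Finset.sum_congr rfl fun n _ => ?_
        rw [coeff_derivative, hL, pow_succ]; push_cast; ring
      · exact lt_of_le_of_lt (natDegree_derivative_le _) (by omega)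
    · intro n hn
      rw [mul_assoc, hfs n (by rw [Finset.mem_range] at hn ⊢; omega), mul_zero]

theorem lfun_root (c S : ℕ → ℂ) (m : ℕ) (q Cc : ℝ) (hq : 0 < q) (hC : 0 ≤ Cc) (hc0 : c 0 = 1)
    (hcm : ∀ n, m ≤ n → c n = 0) (hS : ∀ j, 1 ≤ j → ‖S j‖ ≤ Cc * q ^ j)
    (hrec : ∀ n : ℕ, (n : ℂ) * c n = ∑ j ∈ Finset.Icc 1 n, S j * c (n - j))
    (L : ℂ[X]) (hL : ∀ n, L.coeff n = c n) (T0 : ℂ) (h0 : L.eval T0 = 0) : 1 ≤ ‖T0‖ * q := by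
  by_contra hlt
  push Not at hlt
  have hLne : L ≠ 0 := by
    intro h; have := hL 0; rw [hc0, h] at this; simp at this
  have hT0 : T0 ≠ 0 := by
    rintro rfl
    rw [← coeff_zero_eq_eval_zero, hL, hc0] at h0
    exact one_ne_zero h0
  obtain ⟨R, hR, hRn⟩ := exists_eq_pow_rootMultiplicity_mul_and_not_dvd L hLne T0
  have hk : 0 < rootMultiplicity T0 L := (rootMultiplicity_pos hLne).mpr h0
  obtain ⟨k, hk⟩ := Nat.exists_eq_succ_of_ne_zero hk.ne'
  rw [hk] at hR
  rw [dvd_iff_isRoot, IsRoot] at hRn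
  obtain ⟨ρ, hρ1, hρ2⟩ : ∃ ρ, ‖T0‖ < ρ ∧ ρ < 1 / q := exists_between (by rwa [lt_div_iff₀ hq])
  have hρ0 : 0 ≤ ρ := (norm_nonneg _).trans hρ1.le
  have hρq : ρ * q < 1 := by rwa [lt_div_iff₀ hq] at hρ2
  set B := Cc * (1 - ρ * q)⁻¹
  have hev : ∀ᶠ T in nhdsWithin T0 {T0}ᶜ,
      ‖T * (((k : ℂ) + 1) * R.eval T + (T - T0) * R.derivative.eval T)‖ ≤ ‖T - T0‖ * ‖R.eval T‖ * B := by
    have h1 : ∀ᶠ T in nhdsWithin T0 {T0}ᶜ, ‖T‖ < ρ :=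
      nhdsWithin_le_nhds ((continuous_norm.tendsto T0).eventually (gt_mem_nhds hρ1))
    filter_upwards [h1, self_mem_nhdsWithin] with T hT hne
    obtain ⟨G, hG1, hG2⟩ := lfun_deriv c S m q Cc hq hC hcm hS hrec L hL ρ hρ0 hρq T hT.le
    have hne' : T - T0 ≠ 0 := sub_ne_zero.mpr hne
    rw [hR] at hG2
    simp only [derivative_mul, derivative_X_sub_C_pow, eval_mul, eval_add, eval_pow, eval_sub, eval_X, eval_C,
      eval_natCast, Nat.succ_eq_add_one, Nat.add_sub_cancel] at hG2
    have h2 : T * (((k : ℂ) + 1) * R.eval T + (T - T0) * R.derivative.eval T) = (T - T0) * R.eval T * G := by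
      apply mul_left_cancel₀ (pow_ne_zero k hne')
      push_cast at hG2
      linear_combination hG2
    rw [h2, norm_mul, norm_mul]
    gcongr
  have hl : Filter.Tendsto (fun T => ‖T * (((k : ℂ) + 1) * R.eval T + (T - T0) * R.derivative.eval T)‖)
      (nhdsWithin T0 {T0}ᶜ) (nhds ‖T0 * (((k : ℂ) + 1) * R.eval T0 + (T0 - T0) * R.derivative.eval T0)‖) := by
    apply Filter.Tendsto.mono_left _ nhdsWithin_le_nhds
    apply Continuous.tendsto (f := fun T => ‖T * (((k : ℂ) + 1) * R.eval T + (T - T0) * R.derivative.eval T)‖)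
    have := R.continuous
    have := R.derivative.continuous
    fun_prop
  have hr : Filter.Tendsto (fun T => ‖T - T0‖ * ‖R.eval T‖ * B)
      (nhdsWithin T0 {T0}ᶜ) (nhds (‖T0 - T0‖ * ‖R.eval T0‖ * B)) := by
    apply Filter.Tendsto.mono_left _ nhdsWithin_le_nhds
    apply Continuous.tendsto (f := fun T => ‖T - T0‖ * ‖R.eval T‖ * B)
    have := R.continuous
    fun_prop
  have := le_of_tendsto_of_tendsto hl hr hev
  simp only [sub_self, zero_mul, add_zero, norm_zero] at this
  rw [norm_le_zero_iff] at this
  have h3 : ((k : ℂ) + 1) ≠ 0 := by exact_mod_cast Nat.succ_ne_zero k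
  exact (mul_ne_zero hT0 (mul_ne_zero h3 hRn)) this

theorem lfun_bound (c S : ℕ → ℂ) (m : ℕ) (q Cc : ℝ) (hq : 0 < q) (hC : 0 ≤ Cc) (hc0 : c 0 = 1)
    (hcm : ∀ n, m ≤ n → c n = 0) (hS : ∀ j, 1 ≤ j → ‖S j‖ ≤ Cc * q ^ j)
    (hrec : ∀ n : ℕ, (n : ℂ) * c n = ∑ j ∈ Finset.Icc 1 n, S j * c (n - j)) : ‖c 1‖ ≤ m * q := by
  classical
  set L : ℂ[X] := ∑ n ∈ Finset.range m, C (c n) * X ^ n with hLd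
  have hL : ∀ n, L.coeff n = c n := by
    intro n
    rw [hLd, finset_sum_coeff]
    simp only [coeff_C_mul_X_pow]
    rw [Finset.sum_ite_eq]
    split_ifs with h
    · rfl
    · rw [hcm n (by simpa using h)]
  have hroot := lfun_root c S m q Cc hq hC hc0 hcm hS hrec L hL
  have hLne : L ≠ 0 := by
    intro h; have := hL 0; rw [hc0, h] at this; simp at this
  have hc00 : L.coeff 0 ≠ 0 := by rw [hL, hc0]; exact one_ne_zero
  have htd : L.natTrailingDegree = 0 := by
    rw [natTrailingDegree_eq_zero]; exact Or.inr hc00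
  have hmon : L.reverse.Monic := by
    rw [Monic, reverse_leadingCoeff, trailingCoeff, htd, hL, hc0]
  have hnd : L.reverse.natDegree = L.natDegree := by rw [reverse_natDegree, htd, Nat.sub_zero]
  have hdm : L.natDegree ≤ m := by
    rw [natDegree_le_iff_coeff_eq_zero]
    intro n hn
    rw [hL]; exact hcm n hn.le
  by_cases hd : L.natDegree = 0
  · have : c 1 = 0 := by
      rw [← hL]; exact coeff_eq_zero_of_natDegree_lt (by omega)
    rw [this, norm_zero]; positivity
  have h1 := coeff_le_of_roots_le (p := L.reverse) (f := RingHom.id ℂ) (B := q) (L.natDegree - 1) hmon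
    (IsAlgClosed.splits _) (by
      intro z hz
      rw [Polynomial.map_id, mem_roots hmon.ne_zero, IsRoot] at hz
      by_cases hz0 : z = 0
      · rw [hz0, norm_zero]; exact hq.le
      · have hinv : Invertible z⁻¹ := invertibleOfNonzero (inv_ne_zero hz0)
        have := (eval₂_reverse_eq_zero_iff (RingHom.id ℂ) z⁻¹ L)
        have h2 := this.mp (by
          rw [invOf_eq_inv, inv_inv]; rw [← hz]; rfl)
        have h3 := hroot z⁻¹ (by rw [← h2]; rfl)
        rw [norm_inv] at h3
        rwa [inv_mul_eq_div, one_le_div (norm_pos_iff.mpr hz0)] at h3)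
  rw [Polynomial.map_id, coeff_reverse, hnd] at h1
  have h4 : revAt L.natDegree (L.natDegree - 1) = 1 := by
    rw [revAt_le (Nat.sub_le _ _)]; omega
  have h5 : L.natDegree - (L.natDegree - 1) = 1 := by omega
  rw [h4, h5, hL, pow_one, Nat.choose_symm (Nat.one_le_iff_ne_zero.mpr hd), Nat.choose_one_right] at h1
  refine h1.trans ?_
  rw [mul_comm]
  gcongr

end

section
open Polynomial


noncomputable def lamHom (p : ℕ) [Fact p.Prime] (χ : MulChar (ZMod p) ℂ) (s : Finset (ZMod p))
    (e : ZMod p → ℕ) : (ZMod p)[X] →* ℂ where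
  toFun g := χ (∏ c ∈ s, (g.eval c) ^ e c)
  map_one' := by simp
  map_mul' a b := by simp [mul_pow, Finset.prod_mul_distrib]

theorem lam_zero (p : ℕ) [Fact p.Prime] (χ : MulChar (ZMod p) ℂ) (hχ : χ ≠ 1) (s : Finset (ZMod p))
    (e : ZMod p → ℕ) (h0 : 0 ∈ s) (he : e 0 = 1) (n : ℕ) (hn : s.card ≤ n) :
    ∑ g ∈ monP p n, lamHom p χ s e g = 0 := by
  classical
  set l : (ZMod p)[X] := Lagrange.basis s id 0 with hl
  have hinj : Set.InjOn (id : ZMod p → ZMod p) s := Function.injective_id.injOn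
  have hl0 : l.eval 0 = 1 := Lagrange.eval_basis_self hinj h0
  have hlc : ∀ c ∈ s.erase 0, l.eval c = 0 := fun c hc =>
    Lagrange.eval_basis_of_ne (v := id) (Finset.ne_of_mem_erase hc).symm (Finset.mem_of_mem_erase hc)
  have hld : l.degree < (n : WithBot ℕ) := by
    rw [hl, Lagrange.degree_basis hinj h0]
    have : 0 < s.card := Finset.card_pos.mpr ⟨0, h0⟩
    exact_mod_cast (by omega : s.card - 1 < n)
  have hpert : ∀ (g : (ZMod p)[X]) (t : ZMod p), g ∈ monP p n → g + C t * l ∈ monP p n := by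
    intro g t hg
    rw [mem_monP] at hg ⊢
    have hgd : g.degree = (n : WithBot ℕ) := by rw [degree_eq_natDegree hg.1.ne_zero, hg.2]
    have hlt : (C t * l).degree < g.degree := by
      rw [hgd]; exact (by rw [← smul_eq_C_mul]; exact degree_smul_le t l : (C t * l).degree ≤ l.degree).trans_lt hld
    refine ⟨hg.1.add_of_left hlt, natDegree_eq_of_degree_eq_some ?_⟩
    rw [degree_add_eq_left_of_degree_lt hlt, hgd]
  have hshift : ∀ t : ZMod p, ∑ g ∈ monP p n, lamHom p χ s e g =
      ∑ g ∈ monP p n, lamHom p χ s e (g + C t * l) := by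
    intro t
    symm
    refine Finset.sum_nbij' (fun g => g + C t * l) (fun g => g + C (-t) * l) ?_ ?_ ?_ ?_ ?_
    · intro g hg; exact hpert g t hg
    · intro g hg; exact hpert g (-t) hg
    · intro g _; simp
    · intro g _; simp
    · intro g _; rfl
  have hval : ∀ (g : (ZMod p)[X]) (t : ZMod p), lamHom p χ s e (g + C t * l) =
      χ (g.eval 0 + t) * χ (∏ c ∈ s.erase 0, (g.eval c) ^ e c) := by
    intro g t
    change χ (∏ c ∈ s, ((g + C t * l).eval c) ^ e c) = _
    rw [← Finset.mul_prod_erase s _ h0, map_mul, he, pow_one]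
    simp only [eval_add, eval_mul, eval_C, hl0, mul_one]
    congr 2
    refine Finset.prod_congr rfl fun c hc => ?_
    rw [hlc c hc, mul_zero, add_zero]
  have hsum0 : ∀ g : (ZMod p)[X], ∑ t : ZMod p, lamHom p χ s e (g + C t * l) = 0 := by
    intro g
    simp_rw [hval, ← Finset.sum_mul]
    have : ∑ t : ZMod p, χ (g.eval 0 + t) = ∑ t : ZMod p, χ t :=
      Fintype.sum_equiv (Equiv.addLeft (g.eval 0)) _ _ (fun t => rfl)
    rw [this, MulChar.sum_eq_zero_of_ne_one hχ, zero_mul]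
  have hfin : (p : ℂ) * ∑ g ∈ monP p n, lamHom p χ s e g = 0 := by
    calc (p : ℂ) * ∑ g ∈ monP p n, lamHom p χ s e g
        = ∑ t : ZMod p, ∑ g ∈ monP p n, lamHom p χ s e (g + C t * l) := by
          rw [← Finset.sum_congr rfl (fun t _ => hshift t), Finset.sum_const, Finset.card_univ, ZMod.card,
            nsmul_eq_mul]
      _ = 0 := by
          rw [Finset.sum_comm]
          exact Finset.sum_eq_zero fun g _ => hsum0 g
  have hp : (p : ℂ) ≠ 0 := by exact_mod_cast (Fact.out : p.Prime).ne_zero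
  exact (mul_eq_zero.mp hfin).resolve_left hp

theorem weil_bound (p : ℕ) [Fact p.Prime] (χ : MulChar (ZMod p) ℂ) (hχ : χ ≠ 1) (s : Finset (ZMod p))
    (e : ZMod p → ℕ) (h0 : 0 ∈ s) (he : e 0 = 1) :
    ‖∑ x : ZMod p, χ (∏ c ∈ s, (c - x) ^ e c)‖ ≤ s.card * √(p : ℝ) := by
  classical
  set f : (ZMod p)[X] := ∏ c ∈ s, (C c - X) ^ e c with hf
  set f2 : (ZMod p)[X] := - ∏ c ∈ s.erase 0, (C c - X) ^ e c with hf2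
  have hff2 : f = X * f2 := by
    rw [hf, hf2, ← Finset.mul_prod_erase s _ h0, he]
    simp
  have hf20 : f2.eval 0 ≠ 0 := by
    rw [hf2, eval_neg, eval_prod, neg_ne_zero, Finset.prod_ne_zero_iff]
    intro c hc
    simp only [eval_pow, eval_sub, eval_C, eval_X, sub_zero]
    exact pow_ne_zero _ (Finset.ne_of_mem_erase hc)
  obtain ⟨Cc, hC0, hC⟩ := st_char p χ hχ f f2 hff2 hf20
  have hp : 0 < (p : ℝ) := by exact_mod_cast (Fact.out : p.Prime).pos
  have hS : ∀ j, 1 ≤ j → ‖∑ x : GaloisField p j, lamHom p χ s e (cpoly p j x)‖ ≤ Cc * √(p : ℝ) ^ j := by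
    intro j hj
    have h1 := hC (GaloisField p j)
    have hcard : Fintype.card (GaloisField p j) = p ^ j := by
      rw [← Nat.card_eq_fintype_card, GaloisField.card p j (by omega)]
    rw [hcard] at h1
    have h2 : √((p ^ j : ℕ) : ℝ) = √(p : ℝ) ^ j := by
      push_cast
      rw [Real.sqrt_eq_iff_mul_self_eq (by positivity) (by positivity), ← mul_pow, Real.mul_self_sqrt hp.le]
    rw [h2] at h1
    refine le_trans (le_of_eq ?_) h1
    congr 1
    refine Finset.sum_congr rfl fun x _ => ?_
    change χ (∏ c ∈ s, ((cpoly p j x).eval c) ^ e c) = _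
    congr 1
    rw [hf, map_prod, map_prod]
    refine Finset.prod_congr rfl fun c _ => ?_
    rw [map_pow, map_pow, map_sub, aeval_C, aeval_X, norm_sub_eq p j (by omega)]
  have hc0 : ∑ g ∈ monP p 0, lamHom p χ s e g = 1 := by
    have : monP p 0 = {1} := by
      ext g
      rw [mem_monP, Finset.mem_singleton]
      constructor
      · rintro ⟨h1, h2⟩; exact h1.natDegree_eq_zero.mp h2
      · rintro rfl; exact ⟨monic_one, natDegree_one⟩
    rw [this, Finset.sum_singleton, map_one]
  have hb := lfun_bound (fun n => ∑ g ∈ monP p n, lamHom p χ s e g)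
    (fun j => ∑ x : GaloisField p j, lamHom p χ s e (cpoly p j x)) s.card (√(p : ℝ)) Cc
    (Real.sqrt_pos.mpr hp) hC0 hc0 (fun n hn => lam_zero p χ hχ s e h0 he n hn) hS
    (fun n => newton_rec p (lamHom p χ s e) n)
  refine le_trans (le_of_eq ?_) hb
  congr 1
  refine Finset.sum_bij (fun x _ => X - C x) ?_ ?_ ?_ ?_
  · intro x _; rw [mem_monP]; exact ⟨monic_X_sub_C x, natDegree_X_sub_C x⟩
  · intro x _ y _ h; simpa using h
  · intro g hg
    rw [mem_monP] at hg
    refine ⟨-g.coeff 0, Finset.mem_univ _, ?_⟩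
    rw [map_neg, sub_neg_eq_add]
    exact (hg.1.eq_X_add_C hg.2).symm
  · intro x _
    change _ = χ (∏ c ∈ s, ((X - C x).eval c) ^ e c)
    simp

end


theorem weil_tuple (p : ℕ) [Fact p.Prime] (χ : MulChar (ZMod p) ℂ) (hχ : χ ≠ 1) {ι : Type} [Fintype ι]
    (v : ι → ZMod p) (wt : ι → ℕ) (i0 : ι) (hw : wt i0 = 1)
    (hv : ∀ i, i ≠ i0 → v i ≠ v i0) :
    ‖∑ x : ZMod p, χ (∏ i, (x + v i) ^ wt i)‖ ≤ Fintype.card ι * √(p : ℝ) := by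
  classical
  set s : Finset (ZMod p) := Finset.univ.image (fun i => v i - v i0) with hs
  set e : ZMod p → ℕ := fun c => ∑ i with v i - v i0 = c, wt i with he
  have h0 : (0 : ZMod p) ∈ s := by
    rw [hs, Finset.mem_image]; exact ⟨i0, Finset.mem_univ _, sub_self _⟩
  have he0 : e 0 = 1 := by
    have : (Finset.univ.filter fun i => v i - v i0 = 0) = {i0} := by
      ext i
      simp only [Finset.mem_filter, Finset.mem_univ, true_and, Finset.mem_singleton, sub_eq_zero]
      constructor
      · intro h; by_contra hne; exact hv i hne h
      · rintro rfl; rfl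
    simp only [he, this, Finset.sum_singleton, hw]
  have h1 := weil_bound p χ hχ s e h0 he0
  have h2 : ∑ x : ZMod p, χ (∏ i, (x + v i) ^ wt i) = ∑ x : ZMod p, χ (∏ c ∈ s, (c - x) ^ e c) := by
    refine Fintype.sum_equiv ((Equiv.neg (ZMod p)).trans (Equiv.subRight (v i0))) _ _ (fun x => ?_)
    congr 1
    rw [← Finset.prod_fiberwise_of_maps_to (s := Finset.univ) (t := s) (g := fun i => v i - v i0)
      (fun i _ => Finset.mem_image_of_mem _ (Finset.mem_univ i))]
    refine Finset.prod_congr rfl fun c _ => ?_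
    simp only [he]
    rw [← Finset.prod_pow_eq_pow_sum]
    refine Finset.prod_congr rfl fun i hi => ?_
    rw [Finset.mem_filter] at hi
    rw [← hi.2]
    congr 1
    simp
    ring
  rw [h2]
  refine h1.trans ?_
  gcongr
  exact Finset.card_image_le.trans (by rw [Finset.card_univ])

theorem conj_char (p : ℕ) [Fact p.Prime] (χ : MulChar (ZMod p) ℂ) (y : ZMod p) :
    (starRingEnd ℂ) (χ y) = χ (y ^ (2 * p - 3)) := by
  have hp := (Fact.out : p.Prime).two_le
  by_cases hy : y = 0
  · subst hy
    rw [zero_pow (by omega)]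
    have : χ 0 = 0 := MulChar.map_nonunit χ (by simp)
    rw [this, map_zero]
  · have h1 : y ^ (2 * p - 3) * y = 1 := by
      rw [← pow_succ]
      have : 2 * p - 3 + 1 = (p - 1) * 2 := by omega
      rw [this, pow_mul, ZMod.pow_card_sub_one_eq_one hy, one_pow]
    have h2 : χ y ^ (p - 1) = 1 := by
      rw [← map_pow, ZMod.pow_card_sub_one_eq_one hy, map_one]
    have h3 : ‖χ y‖ = 1 := Complex.norm_eq_one_of_pow_eq_one h2 (by omega)
    have h4 : χ y ≠ 0 := by rw [← norm_ne_zero_iff, h3]; exact one_ne_zero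
    apply mul_right_cancel₀ h4
    rw [← map_mul, h1, map_one, Complex.conj_mul', h3]; norm_num

theorem char_norm_le (p : ℕ) [Fact p.Prime] (χ : MulChar (ZMod p) ℂ) (y : ZMod p) : ‖χ y‖ ≤ 1 := by
  have hp := (Fact.out : p.Prime).two_le
  by_cases hy : y = 0
  · subst hy
    have : χ 0 = 0 := MulChar.map_nonunit χ (by simp)
    rw [this, norm_zero]; exact zero_le_one
  · have h2 : χ y ^ (p - 1) = 1 := by
      rw [← map_pow, ZMod.pow_card_sub_one_eq_one hy, map_one]
    exact (Complex.norm_eq_one_of_pow_eq_one h2 (by omega)).le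

theorem weil_mixed_aux (p : ℕ) [Fact p.Prime] (χ : MulChar (ZMod p) ℂ) (hχ : χ ≠ 1) (r : ℕ)
    (u : Fin r ⊕ Fin r → ZMod p) (i0 : Fin r) (hv : ∀ i, i ≠ Sum.inl i0 → u i ≠ u (Sum.inl i0)) :
    ‖∑ x : ZMod p, (∏ i, χ (x + u (Sum.inl i))) * ∏ i, (starRingEnd ℂ) (χ (x + u (Sum.inr i)))‖
      ≤ 2 * r * √(p : ℝ) := by
  have h := weil_tuple p χ hχ u (Sum.elim (fun _ => 1) (fun _ => 2 * p - 3)) (Sum.inl i0) rfl hv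
  rw [Fintype.card_sum, Fintype.card_fin] at h
  refine le_trans (le_of_eq ?_) (h.trans (le_of_eq ?_))
  · congr 1
    refine Finset.sum_congr rfl fun x _ => ?_
    rw [Fintype.prod_sum_type, map_mul, map_prod, map_prod]
    simp only [Sum.elim_inl, Sum.elim_inr, pow_one, conj_char]
  · push_cast; ring

theorem weil_mixed (p : ℕ) [Fact p.Prime] (χ : MulChar (ZMod p) ℂ) (hχ : χ ≠ 1) (r : ℕ)
    (u : Fin r ⊕ Fin r → ZMod p) (i0 : Fin r ⊕ Fin r) (hv : ∀ i, i ≠ i0 → u i ≠ u i0) :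
    ‖∑ x : ZMod p, (∏ i, χ (x + u (Sum.inl i))) * ∏ i, (starRingEnd ℂ) (χ (x + u (Sum.inr i)))‖
      ≤ 2 * r * √(p : ℝ) := by
  rcases i0 with i0 | i0
  · exact weil_mixed_aux p χ hχ r u i0 hv
  · have h := weil_mixed_aux p χ hχ r (u ∘ Sum.swap) i0 (by
      intro i hi
      apply hv
      intro h'
      apply hi
      have := congrArg Sum.swap h'
      simpa using this)
    refine le_trans (le_of_eq ?_) h
    rw [← RCLike.norm_conj]
    congr 1
    rw [map_sum]
    refine Finset.sum_congr rfl fun x _ => ?_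
    simp only [map_mul, map_prod, RingHomCompTriple.comp_apply, RingHom.id_apply, Function.comp,
      Sum.swap_inl, Sum.swap_inr]
    rw [mul_comm]

theorem bad_count (α ι : Type) [Fintype α] [Fintype ι] [DecidableEq ι] [DecidableEq α] (r : ℕ) (hr : 1 ≤ r)
    (hι : Fintype.card ι = 2 * r) :
    (Finset.univ.filter fun t : ι → α => ∀ i0, ∃ i, i ≠ i0 ∧ t i = t i0).card ≤
      r ^ (2 * r) * Fintype.card α ^ r := by
  have hsub : (Finset.univ.filter fun t : ι → α => ∀ i0, ∃ i, i ≠ i0 ∧ t i = t i0) ⊆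
      (Finset.univ : Finset ((ι → Fin r) × (Fin r → α))).image (fun ja => ja.2 ∘ ja.1) := by
    intro t ht
    rw [Finset.mem_filter] at ht
    rw [Finset.mem_image]
    have hle : (Finset.univ.image t).card ≤ r := by
      have h1 : 2 * (Finset.univ.image t).card ≤ (Finset.univ : Finset ι).card := by
        refine Finset.mul_card_image_le_card (f := t) Finset.univ 2 ?_
        intro a ha
        obtain ⟨i0, _, rfl⟩ := Finset.mem_image.mp ha
        obtain ⟨i, hi, hti⟩ := ht.2 i0
        exact Finset.one_lt_card.mpr ⟨i, by simp [hti], i0, by simp, hi⟩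
      rw [Finset.card_univ, hι] at h1
      omega
    have e1 := (Finset.univ.image t).equivFin
    set n := (Finset.univ.image t).card
    have hne : Nonempty ι := Fintype.card_pos_iff.mp (by omega)
    obtain ⟨i1⟩ := hne
    refine ⟨(fun i => Fin.castLE hle (e1 ⟨t i, Finset.mem_image_of_mem _ (Finset.mem_univ i)⟩),
      fun k => if h : (k : ℕ) < n then (e1.symm ⟨k, h⟩ : α) else t i1), Finset.mem_univ _, ?_⟩
    funext i
    simp
  refine (Finset.card_le_card hsub).trans (Finset.card_image_le.trans ?_)
  rw [Finset.card_univ, Fintype.card_prod, Fintype.card_fun, Fintype.card_fun, Fintype.card_fin, hι]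

theorem moment_bound (p : ℕ) [Fact p.Prime] (χ : MulChar (ZMod p) ℂ) (hχ : χ ≠ 1) (r : ℕ) (hr : 1 ≤ r)
    (α : Type) [Fintype α] [DecidableEq α] (φ : α → ZMod p) (hφ : Function.Injective φ)
    (hV : Fintype.card α ^ r ≤ p) :
    ∑ x : ZMod p, ∑ y : ZMod p, ‖∑ v : α, χ (x + φ v) * (starRingEnd ℂ) (χ (y + φ v))‖ ^ (2 * r) ≤
      ((r : ℝ) ^ (2 * r) + 4 * r ^ 2) * (p : ℝ) ^ 3 := by
  classical
  set W : (Fin r ⊕ Fin r → α) → ℂ := fun t => ∑ x : ZMod p, (∏ i, χ (x + φ (t (Sum.inl i)))) *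
    ∏ i, (starRingEnd ℂ) (χ (x + φ (t (Sum.inr i)))) with hW
  have hexp : ∑ x : ZMod p, ∑ y : ZMod p, ‖∑ v : α, χ (x + φ v) * (starRingEnd ℂ) (χ (y + φ v))‖ ^ (2 * r)
      = ∑ t, ‖W t‖ ^ 2 := by
    have hc : ((∑ x : ZMod p, ∑ y : ZMod p, ‖∑ v : α, χ (x + φ v) * (starRingEnd ℂ) (χ (y + φ v))‖ ^ (2 * r) : ℝ) : ℂ)
      = ((∑ t, ‖W t‖ ^ 2 : ℝ) : ℂ) := by
      push_cast
      have h1 : ∀ t, ((‖W t‖ : ℂ)) ^ 2 = ∑ x : ZMod p, ∑ y : ZMod p,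
        ((∏ i, χ (x + φ (t (Sum.inl i)))) * ∏ i, (starRingEnd ℂ) (χ (x + φ (t (Sum.inr i))))) *
        (starRingEnd ℂ) ((∏ i, χ (y + φ (t (Sum.inl i)))) * ∏ i, (starRingEnd ℂ) (χ (y + φ (t (Sum.inr i))))) := by
        intro t
        rw [← Complex.mul_conj', hW]
        simp only
        rw [map_sum, Finset.sum_mul_sum]
      simp_rw [h1]
      symm
      rw [Finset.sum_comm]
      refine Finset.sum_congr rfl fun x _ => ?_
      rw [Finset.sum_comm]
      refine Finset.sum_congr rfl fun y _ => ?_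
      symm
      rw [pow_mul, ← Complex.mul_conj', mul_pow, ← map_pow, Fintype.sum_pow, map_sum, Finset.sum_mul_sum]
      rw [← Fintype.sum_prod_type']
      refine Fintype.sum_equiv (Equiv.sumArrowEquivProdArrow (Fin r) (Fin r) α).symm _ _ ?_
      rintro ⟨a, b⟩
      simp only [Equiv.sumArrowEquivProdArrow, Equiv.coe_fn_symm_mk, Sum.elim_inl, Sum.elim_inr, map_mul,
        map_prod, Finset.prod_mul_distrib, RingHomCompTriple.comp_apply, RingHom.id_apply]
      ring
    exact_mod_cast hc
  rw [hexp]
  have hp : (0 : ℝ) < p := by exact_mod_cast (Fact.out : p.Prime).pos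
  have hWp : ∀ t, ‖W t‖ ≤ p := by
    intro t
    refine (norm_sum_le _ _).trans ?_
    refine (Finset.sum_le_card_nsmul _ _ 1 ?_).trans ?_
    · intro x _
      rw [norm_mul, norm_prod, norm_prod]
      refine mul_le_one₀ (Finset.prod_le_one (fun _ _ => norm_nonneg _) fun _ _ => char_norm_le p χ _)
        (Finset.prod_nonneg fun _ _ => norm_nonneg _)
        (Finset.prod_le_one (fun _ _ => norm_nonneg _) fun _ _ => ?_)
      rw [RCLike.norm_conj]; exact char_norm_le p χ _
    · rw [Finset.card_univ, ZMod.card]; simp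
  rw [← Finset.sum_filter_add_sum_filter_not Finset.univ
    (fun t : Fin r ⊕ Fin r → α => ∀ i0, ∃ i, i ≠ i0 ∧ t i = t i0)]
  have hbad := bad_count α (Fin r ⊕ Fin r) r hr (by rw [Fintype.card_sum, Fintype.card_fin]; ring)
  have hV' : (Fintype.card α : ℝ) ^ r ≤ p := by exact_mod_cast hV
  have b1 : ∑ t with (∀ i0, ∃ i, i ≠ i0 ∧ t i = t i0), ‖W t‖ ^ 2 ≤ (r : ℝ) ^ (2 * r) * (p : ℝ) ^ 3 := by
    refine (Finset.sum_le_card_nsmul _ _ ((p : ℝ) ^ 2) ?_).trans ?_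
    · intro t _; exact pow_le_pow_left₀ (norm_nonneg _) (hWp t) 2
    · rw [nsmul_eq_mul]
      calc _ ≤ ((r ^ (2 * r) * Fintype.card α ^ r : ℕ) : ℝ) * (p : ℝ) ^ 2 := by
            gcongr
        _ = (r : ℝ) ^ (2 * r) * (Fintype.card α : ℝ) ^ r * (p : ℝ) ^ 2 := by push_cast; ring
        _ ≤ (r : ℝ) ^ (2 * r) * (p : ℝ) * (p : ℝ) ^ 2 := by gcongr
        _ = _ := by ring
  have b2 : ∑ t with ¬ (∀ i0, ∃ i, i ≠ i0 ∧ t i = t i0), ‖W t‖ ^ 2 ≤ 4 * (r : ℝ) ^ 2 * (p : ℝ) ^ 3 := by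
    refine (Finset.sum_le_card_nsmul _ _ (4 * (r : ℝ) ^ 2 * p) ?_).trans ?_
    · intro t ht
      rw [Finset.mem_filter] at ht
      have h2 := ht.2
      push Not at h2
      obtain ⟨i0, hi0⟩ := h2
      have := weil_mixed p χ hχ r (φ ∘ t) i0 (fun i hi h => hi0 i hi (hφ h))
      calc ‖W t‖ ^ 2 ≤ (2 * r * √(p : ℝ)) ^ 2 := pow_le_pow_left₀ (norm_nonneg _) this 2
        _ = _ := by rw [mul_pow, Real.sq_sqrt hp.le]; ring
    · rw [nsmul_eq_mul]
      have hc : ((Finset.univ.filter fun t : Fin r ⊕ Fin r → α => ¬ ∀ i0, ∃ i, i ≠ i0 ∧ t i = t i0).card : ℝ)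
          ≤ (p : ℝ) ^ 2 := by
        calc _ ≤ ((Fintype.card (Fin r ⊕ Fin r → α) : ℕ) : ℝ) := by
              exact_mod_cast Finset.card_le_univ _
          _ = ((Fintype.card α : ℝ) ^ r) ^ 2 := by
              rw [Fintype.card_fun, Fintype.card_sum, Fintype.card_fin]; push_cast; rw [← pow_mul]; congr 1; ring
          _ ≤ _ := by gcongr
      calc _ ≤ (p : ℝ) ^ 2 * (4 * (r : ℝ) ^ 2 * p) := by gcongr
        _ = _ := by ring
  linarith


theorem divisor_bound (ε : ℝ) (hε : 0 < ε) : ∃ C : ℝ, 1 ≤ C ∧ ∀ n : ℕ, n ≠ 0 →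
    (n.divisors.card : ℝ) ≤ C * (n : ℝ) ^ ε := by
  have hl2 : 0 < Real.log 2 := Real.log_pos (by norm_num)
  set c : ℝ := 1 + 1 / (ε * Real.log 2) with hc
  have hc1 : 1 ≤ c := by rw [hc]; have : 0 < 1 / (ε * Real.log 2) := by positivity
                         linarith
  set P : ℕ := ⌈(2 : ℝ) ^ (1 / ε)⌉₊ with hP
  refine ⟨c ^ P, one_le_pow₀ hc1, fun n hn => ?_⟩
  rw [Nat.card_divisors hn]
  have hn' : (n : ℝ) ^ ε = ∏ q ∈ n.primeFactors, ((q : ℝ) ^ ε) ^ (n.factorization q) := by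
    conv_lhs => rw [← Nat.prod_factorization_pow_eq_self hn]
    rw [Nat.prod_factorization_eq_prod_primeFactors]
    push_cast
    rw [← Real.finsetProd_rpow _ _ (fun _ _ => by positivity)]
    refine Finset.prod_congr rfl fun q _ => ?_
    rw [← Real.rpow_natCast, ← Real.rpow_natCast, ← Real.rpow_mul (by positivity), ← Real.rpow_mul (by positivity), mul_comm]
  have hone : ∀ q ∈ n.primeFactors, ((n.factorization q + 1 : ℕ) : ℝ) ≤
      (if q < P then c else 1) * ((q : ℝ) ^ ε) ^ (n.factorization q) := by
    intro q hq
    set v := n.factorization q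
    have hq2 : (2 : ℝ) ≤ q := by exact_mod_cast (Nat.prime_of_mem_primeFactors hq).two_le
    split_ifs with h
    · have h1 : (1 + ε * v * Real.log 2) ≤ ((q : ℝ) ^ ε) ^ v := by
        calc 1 + ε * v * Real.log 2 ≤ Real.exp (ε * v * Real.log 2) := by
              have := Real.add_one_le_exp (ε * v * Real.log 2); linarith
          _ = ((2 : ℝ) ^ ε) ^ v := by
              rw [← Real.rpow_natCast, ← Real.rpow_mul (by norm_num), Real.rpow_def_of_pos (by norm_num)]
              congr 1; ring
          _ ≤ _ := by gcongr
      have h2 : ((v + 1 : ℕ) : ℝ) ≤ c * (1 + ε * v * Real.log 2) := by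
        rw [hc]
        have : 1 / (ε * Real.log 2) * (ε * v * Real.log 2) = v := by field_simp
        have h3 : 0 < 1 / (ε * Real.log 2) := by positivity
        have h4 : 0 ≤ ε * v * Real.log 2 := by positivity
        push_cast
        nlinarith
      exact h2.trans (mul_le_mul_of_nonneg_left h1 (by linarith))
    · rw [one_mul]
      have h1 : (2 : ℝ) ≤ (q : ℝ) ^ ε := by
        have h2 : (2 : ℝ) ^ (1 / ε) ≤ q := (Nat.le_ceil _).trans (by exact_mod_cast not_lt.mp h)
        calc (2 : ℝ) = ((2 : ℝ) ^ (1 / ε)) ^ ε := by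
              rw [← Real.rpow_mul (by norm_num), one_div, inv_mul_cancel₀ hε.ne', Real.rpow_one]
          _ ≤ _ := by gcongr
      calc ((v + 1 : ℕ) : ℝ) ≤ ((2 ^ v : ℕ) : ℝ) := by exact_mod_cast Nat.succ_le_of_lt Nat.lt_two_pow_self
        _ = (2 : ℝ) ^ v := by push_cast; rfl
        _ ≤ _ := by gcongr
  rw [hn']
  push_cast at hone ⊢
  refine (Finset.prod_le_prod (fun _ _ => by positivity) hone).trans ?_
  rw [Finset.prod_mul_distrib]
  refine mul_le_mul_of_nonneg_right ?_ (Finset.prod_nonneg fun _ _ => by positivity)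
  rw [Finset.prod_ite, Finset.prod_const, Finset.prod_const_one, mul_one]
  refine pow_le_pow_right₀ hc1 ?_
  calc _ ≤ (Finset.range P).card := Finset.card_le_card (fun q hq => by
          rw [Finset.mem_filter] at hq; exact Finset.mem_range.mpr hq.2)
    _ = P := Finset.card_range P

/-- parameter set -/
def parS (K0 M0 U : ℕ) (I : Finset ℤ) : Finset (ℕ × ℤ × ℕ × ℕ × ℕ) :=
  (Finset.Icc 1 K0 ×ˢ I ×ˢ Finset.Icc 1 M0 ×ˢ Finset.Icc 1 M0 ×ˢ Finset.Icc 1 U).filter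
    (fun s => s.2.2.1 ≠ s.2.2.2.1)

def rhoQ (a b : ℤ) (k : ℕ) (n : ℤ) (m u : ℕ) : ℚ := (a * k + b * m * n : ℤ) / ((m * u : ℕ) : ℚ)

def rhoP (a b : ℤ) (s : ℕ × ℤ × ℕ × ℕ × ℕ) : ℚ × ℚ :=
  (rhoQ a b s.1 s.2.1 s.2.2.1 s.2.2.2.2, rhoQ a b s.1 s.2.1 s.2.2.2.1 s.2.2.2.2)

theorem rho_key (a b : ℤ) (ha : a ≠ 0) (k k' m1 m2 m1' m2' u u' : ℕ) (n n' : ℤ)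
    (h1 : 0 < m1) (h2 : 0 < m2) (h1' : 0 < m1') (h2' : 0 < m2') (hu : 0 < u) (hu' : 0 < u')
    (e1 : rhoQ a b k n m1 u = rhoQ a b k' n' m1' u') (e2 : rhoQ a b k n m2 u = rhoQ a b k' n' m2' u') :
    ((k * u' * m1' * m2' : ℕ) : ℤ) * ((m2 : ℤ) - m1) = k' * ((m2' : ℤ) - m1') * u * m1 * m2 := by
  unfold rhoQ at e1 e2
  have q1 : (m1 : ℚ) ≠ 0 := by positivity
  have q2 : (m2 : ℚ) ≠ 0 := by positivity
  have q3 : (m1' : ℚ) ≠ 0 := by positivity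
  have q4 : (m2' : ℚ) ≠ 0 := by positivity
  have q5 : (u : ℚ) ≠ 0 := by positivity
  have q6 : (u' : ℚ) ≠ 0 := by positivity
  have qa : (a : ℚ) ≠ 0 := by exact_mod_cast ha
  push_cast at e1 e2
  have e3 : (a : ℚ) * k * (m2 - m1) / (m1 * m2 * u) = (a : ℚ) * k' * (m2' - m1') / (m1' * m2' * u') := by
    have t1 : (a : ℚ) * k * (m2 - m1) / (m1 * m2 * u) =
      (a * k + b * m1 * n) / (m1 * u) - (a * k + b * m2 * n) / (m2 * u) := by field_simp; ring
    have t2 : (a : ℚ) * k' * (m2' - m1') / (m1' * m2' * u') =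
      (a * k' + b * m1' * n') / (m1' * u') - (a * k' + b * m2' * n') / (m2' * u') := by field_simp; ring
    rw [t1, t2, e1, e2]
  rw [div_eq_div_iff (by positivity) (by positivity)] at e3
  have e4 : (k * u' * m1' * m2' : ℚ) * ((m2 : ℚ) - m1) = k' * ((m2' : ℚ) - m1') * u * m1 * m2 := by
    apply mul_left_cancel₀ qa
    linear_combination e3
  push_cast
  exact_mod_cast e4

theorem rho_n (a b : ℤ) (hb : b ≠ 0) (k m u : ℕ) (n n' : ℤ) (hm : 0 < m) (hu : 0 < u)
    (e : rhoQ a b k n m u = rhoQ a b k n' m u) : n = n' := by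
  unfold rhoQ at e
  have q1 : ((m * u : ℕ) : ℚ) ≠ 0 := by positivity
  rw [div_left_inj' q1] at e
  have e' : a * k + b * m * n = a * k + b * m * n' := by exact_mod_cast e
  have : b * m ≠ 0 := mul_ne_zero hb (by positivity)
  exact mul_left_cancel₀ this (by linarith)

theorem div_of_key (X0 g s t k' u : ℕ) (d' : ℤ) (hg : 0 < g) (hs : 0 < s) (ht : 0 < t) (hst : Nat.Coprime s t)
    (h : (X0 : ℤ) * ((g * t : ℕ) - (g * s : ℕ) : ℤ) = k' * d' * u * (g * s : ℕ) * (g * t : ℕ)) :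
    s ∣ X0 ∧ t ∣ X0 ∧ k' ∣ X0 * ((t : ℤ) - s).natAbs ∧ u ∣ X0 * ((t : ℤ) - s).natAbs ∧
      g ∣ X0 * ((t : ℤ) - s).natAbs := by
  have hg' : (g : ℤ) ≠ 0 := by positivity
  have h' : (X0 : ℤ) * ((t : ℤ) - s) = k' * d' * u * g * s * t := by
    apply mul_left_cancel₀ hg'
    push_cast at h
    linear_combination h
  have hcop : IsCoprime (s : ℤ) (t : ℤ) := Nat.isCoprime_iff_coprime.mpr hst
  have c1 : IsCoprime (s : ℤ) ((t : ℤ) - s) := by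
    obtain ⟨x, y, hxy⟩ := hcop
    exact ⟨x + y, y, by linear_combination hxy⟩
  have c2 : IsCoprime (t : ℤ) ((t : ℤ) - s) := by
    obtain ⟨x, y, hxy⟩ := hcop
    exact ⟨x + y, -x, by linear_combination hxy⟩
  have habs : ∀ d : ℤ, d ∣ (X0 : ℤ) * ((t : ℤ) - s) → d.natAbs ∣ X0 * ((t : ℤ) - s).natAbs := by
    intro d hd
    have := Int.natAbs_dvd_natAbs.mpr hd
    rwa [Int.natAbs_mul, Int.natAbs_natCast] at this
  refine ⟨?_, ?_, ?_, ?_, ?_⟩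
  · have : (s : ℤ) ∣ X0 := c1.dvd_of_dvd_mul_right (by rw [h']; exact ⟨k' * d' * u * g * t, by ring⟩)
    exact_mod_cast this
  · have : (t : ℤ) ∣ X0 := c2.dvd_of_dvd_mul_right (by rw [h']; exact ⟨k' * d' * u * g * s, by ring⟩)
    exact_mod_cast this
  · exact habs k' (by rw [h']; exact ⟨d' * u * g * s * t, by ring⟩)
  · exact habs u (by rw [h']; exact ⟨k' * d' * g * s * t, by ring⟩)
  · exact habs g (by rw [h']; exact ⟨k' * d' * u * s * t, by ring⟩)

theorem energy_bound (a b : ℤ) (ha : a ≠ 0) (hb : b ≠ 0) (K0 M0 U B D : ℕ) (I : Finset ℤ)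
    (hB : K0 * U * M0 * M0 * M0 ≤ B) (hD : ∀ n : ℕ, n ≠ 0 → n ≤ B → n.divisors.card ≤ D) :
    (((parS K0 M0 U I) ×ˢ (parS K0 M0 U I)).filter (fun ss => rhoP a b ss.1 = rhoP a b ss.2)).card ≤
      D ^ 5 * (K0 * U * M0 * M0 * I.card) := by
  classical
  set P := ((parS K0 M0 U I) ×ˢ (parS K0 M0 U I)).filter (fun ss => rhoP a b ss.1 = rhoP a b ss.2) with hP
  set f : (ℕ × ℤ × ℕ × ℕ × ℕ) × (ℕ × ℤ × ℕ × ℕ × ℕ) → ℕ × ℕ × ℕ × ℕ × ℤ :=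
    fun ss => (ss.1.1, ss.2.2.2.2.2, ss.2.2.2.1, ss.2.2.2.2.1, ss.1.2.1) with hf
  have himg : (P.image f).card ≤ K0 * U * M0 * M0 * I.card := by
    have hsub : P.image f ⊆ Finset.Icc 1 K0 ×ˢ Finset.Icc 1 U ×ˢ Finset.Icc 1 M0 ×ˢ Finset.Icc 1 M0 ×ˢ I := by
      intro x hx
      obtain ⟨⟨⟨k, n, m1, m2, u⟩, ⟨k', n', m1', m2', u'⟩⟩, hss, rfl⟩ := Finset.mem_image.mp hx
      simp only [hP, parS, Finset.mem_filter, Finset.mem_product] at hss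
      simp only [hf, Finset.mem_product]
      tauto
    refine (Finset.card_le_card hsub).trans ?_
    simp only [Finset.card_product, Nat.card_Icc, Nat.add_sub_cancel]
    apply le_of_eq; ring
  refine (Finset.card_le_mul_card_image P (D ^ 5) ?_).trans (Nat.mul_le_mul_left _ himg)
  rintro ⟨k, u', m1', m2', n⟩ hx
  set X0 := k * u' * m1' * m2' with hX0
  set code : (ℕ × ℤ × ℕ × ℕ × ℕ) × (ℕ × ℤ × ℕ × ℕ × ℕ) → (Σ _ : ℕ × ℕ, ℕ × ℕ × ℕ) :=
    fun ss => ⟨(ss.1.2.2.1 / Nat.gcd ss.1.2.2.1 ss.1.2.2.2.1, ss.1.2.2.2.1 / Nat.gcd ss.1.2.2.1 ss.1.2.2.2.1),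
      (ss.2.1, ss.1.2.2.2.2, Nat.gcd ss.1.2.2.1 ss.1.2.2.2.1)⟩ with hcode
  set tgt : Finset (Σ _ : ℕ × ℕ, ℕ × ℕ × ℕ) := ((X0.divisors ×ˢ X0.divisors).filter
      (fun st => X0 * ((st.2 : ℤ) - st.1).natAbs ≠ 0 ∧ X0 * ((st.2 : ℤ) - st.1).natAbs ≤ B)).sigma
      (fun st => (X0 * ((st.2 : ℤ) - st.1).natAbs).divisors ×ˢ (X0 * ((st.2 : ℤ) - st.1).natAbs).divisors ×ˢ
        (X0 * ((st.2 : ℤ) - st.1).natAbs).divisors) with htgt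
  have hxP : X0 ≠ 0 ∧ X0 ≤ B := by
    obtain ⟨⟨⟨k1, n1, m1, m2, u⟩, ⟨k', n', m1'', m2'', u''⟩⟩, hss, hfe⟩ := Finset.mem_image.mp hx
    simp only [hP, parS, Finset.mem_filter, Finset.mem_product, Finset.mem_Icc] at hss
    simp only [hf, Prod.mk.injEq] at hfe
    obtain ⟨rfl, rfl, rfl, rfl, rfl⟩ := hfe
    obtain ⟨⟨⟨⟨hk, hn, hm1, hm2, hu⟩, hne⟩, ⟨⟨hk', hn', hm1', hm2', hu'⟩, hne'⟩⟩, hr⟩ := hss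
    have : 0 < X0 := Nat.mul_pos (Nat.mul_pos (Nat.mul_pos hk.1 hu'.1) hm1'.1) hm2'.1
    refine ⟨this.ne', ?_⟩
    have hM : 1 ≤ M0 := hm1.1.trans hm1.2
    calc X0 ≤ K0 * U * M0 * M0 := Nat.mul_le_mul (Nat.mul_le_mul (Nat.mul_le_mul hk.2 hu'.2) hm1'.2) hm2'.2
      _ ≤ K0 * U * M0 * M0 * M0 := Nat.le_mul_of_pos_right _ hM
      _ ≤ B := hB
  have hcard : tgt.card ≤ D ^ 5 := by
    rw [htgt, Finset.card_sigma]
    have h1 : ∀ st ∈ ((X0.divisors ×ˢ X0.divisors).filter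
      (fun st => X0 * ((st.2 : ℤ) - st.1).natAbs ≠ 0 ∧ X0 * ((st.2 : ℤ) - st.1).natAbs ≤ B)),
      ((X0 * ((st.2 : ℤ) - st.1).natAbs).divisors ×ˢ (X0 * ((st.2 : ℤ) - st.1).natAbs).divisors ×ˢ
        (X0 * ((st.2 : ℤ) - st.1).natAbs).divisors).card ≤ D ^ 3 := by
      intro st hst
      rw [Finset.mem_filter] at hst
      have := hD _ hst.2.1 hst.2.2
      rw [Finset.card_product, Finset.card_product]
      calc _ ≤ D * (D * D) := Nat.mul_le_mul this (Nat.mul_le_mul this this)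
        _ = D ^ 3 := by ring
    refine (Finset.sum_le_card_nsmul _ _ _ h1).trans ?_
    rw [smul_eq_mul]
    have h2 := hD X0 hxP.1 hxP.2
    calc _ ≤ (D * D) * D ^ 3 := by
          refine Nat.mul_le_mul_right _ ((Finset.card_filter_le _ _).trans ?_)
          rw [Finset.card_product]; exact Nat.mul_le_mul h2 h2
      _ = D ^ 5 := by ring
  refine le_trans ?_ hcard
  refine Finset.card_le_card_of_injOn code ?_ ?_
  · rintro ⟨⟨k1, n1, m1, m2, u⟩, ⟨k', n', m1'', m2'', u''⟩⟩ hss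
    simp only [hP, hf, parS, Finset.coe_filter, Set.mem_setOf_eq, Finset.mem_filter, Finset.mem_product,
      Finset.mem_Icc, Prod.mk.injEq] at hss
    obtain ⟨⟨⟨⟨⟨hk, hn, hm1, hm2, hu⟩, hne⟩, ⟨⟨hk', hn', hm1', hm2', hu'⟩, hne'⟩⟩, hr⟩, hfe⟩ := hss
    obtain ⟨rfl, rfl, rfl, rfl, rfl⟩ := hfe
    simp only [rhoP, Prod.mk.injEq] at hr
    have key := rho_key a b ha k1 k' m1 m2 m1'' m2'' u u'' n1 n' hm1.1 hm2.1 hm1'.1 hm2'.1 hu.1 hu'.1 hr.1 hr.2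
    rw [← hX0] at key
    set g := Nat.gcd m1 m2 with hg
    have hgpos : 0 < g := Nat.gcd_pos_of_pos_left _ hm1.1
    have em1 : g * (m1 / g) = m1 := Nat.mul_div_cancel' (Nat.gcd_dvd_left _ _)
    have em2 : g * (m2 / g) = m2 := Nat.mul_div_cancel' (Nat.gcd_dvd_right _ _)
    have hspos : 0 < m1 / g := Nat.pos_of_ne_zero (by intro h; rw [h, mul_zero] at em1; omega)
    have htpos : 0 < m2 / g := Nat.pos_of_ne_zero (by intro h; rw [h, mul_zero] at em2; omega)
    have hcop : Nat.Coprime (m1 / g) (m2 / g) := Nat.coprime_div_gcd_div_gcd hgpos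
    rw [← em1, ← em2] at key
    obtain ⟨d1, d2, d3, d4, d5⟩ := div_of_key X0 g _ _ k' u _ hgpos hspos htpos hcop key
    have hne2 : m1 / g ≠ m2 / g := by
      intro h; apply hne; rw [← em1, ← em2, h]
    have hab : ((m2 / g : ℕ) - (m1 / g : ℕ) : ℤ).natAbs ≠ 0 := by
      rw [Int.natAbs_ne_zero, sub_ne_zero]; exact_mod_cast hne2.symm
    have hab2 : ((m2 / g : ℕ) - (m1 / g : ℕ) : ℤ).natAbs ≤ M0 := by
      have h1 : m1 / g ≤ M0 := (Nat.div_le_self _ _).trans hm1.2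
      have h2 : m2 / g ≤ M0 := (Nat.div_le_self _ _).trans hm2.2
      omega
    have hnz : X0 * ((m2 / g : ℕ) - (m1 / g : ℕ) : ℤ).natAbs ≠ 0 := mul_ne_zero hxP.1 hab
    simp only [hcode, htgt, Finset.coe_sigma, Set.mem_sigma_iff, Finset.mem_coe, Finset.mem_filter,
      Finset.mem_product, Nat.mem_divisors]
    refine ⟨⟨⟨⟨d1, hxP.1⟩, ⟨d2, hxP.1⟩⟩, hnz, ?_⟩, ⟨d3, hnz⟩, ⟨d4, hnz⟩, ⟨d5, hnz⟩⟩
    calc _ ≤ (K0 * U * M0 * M0) * M0 := Nat.mul_le_mul (Nat.mul_le_mul (Nat.mul_le_mul (Nat.mul_le_mul hk.2 hu'.2) hm1'.2) hm2'.2) hab2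
      _ ≤ B := hB
  · rintro ⟨⟨k1, n1, m1, m2, u⟩, ⟨k', n', m1'', m2'', u''⟩⟩ hss ⟨⟨k2, n2, l1, l2, w⟩, ⟨k2', n2', l1'', l2'', w''⟩⟩ hss2 heq
    simp only [hP, hf, parS, Finset.coe_filter, Set.mem_setOf_eq, Finset.mem_filter, Finset.mem_product,
      Finset.mem_Icc, Prod.mk.injEq] at hss hss2
    obtain ⟨⟨⟨⟨⟨hk, hn, hm1, hm2, hu⟩, hne⟩, ⟨⟨hk', hn', hm1', hm2', hu'⟩, hne'⟩⟩, hr⟩, hfe⟩ := hss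
    obtain ⟨⟨⟨⟨⟨ik, i_n, im1, im2, iu⟩, ine⟩, ⟨⟨ik', in', im1', im2', iu'⟩, ine'⟩⟩, ir⟩, ife⟩ := hss2
    obtain ⟨rfl, rfl, rfl, rfl, rfl⟩ := hfe
    obtain ⟨rfl, rfl, rfl, rfl, rfl⟩ := ife
    simp only [rhoP, Prod.mk.injEq] at hr ir
    simp only [hcode, Sigma.mk.injEq, Prod.mk.injEq, heq_eq_eq] at heq
    obtain ⟨⟨e1, e2⟩, e3, e4, e5⟩ := heq
    have hm : m1 = l1 := by
      rw [← Nat.mul_div_cancel' (Nat.gcd_dvd_left m1 m2), e1, e5, Nat.mul_div_cancel' (Nat.gcd_dvd_left l1 l2)]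
    have hm' : m2 = l2 := by
      rw [← Nat.mul_div_cancel' (Nat.gcd_dvd_right m1 m2), e2, e5, Nat.mul_div_cancel' (Nat.gcd_dvd_right l1 l2)]
    subst hm hm' e3 e4
    have hnn := rho_n a b hb k' l1'' w'' n' n2' hm1'.1 hu'.1 (hr.1.symm.trans ir.1)
    subst hnn
    rfl


theorem spaced_count {β : Type} (R : Finset β) (f : β → ℝ) (L δ : ℝ) (hδ : 0 < δ) (hL : 0 ≤ L)
    (h1 : ∀ q ∈ R, |f q| ≤ L) (h2 : ∀ q ∈ R, ∀ q' ∈ R, q ≠ q' → δ ≤ |f q - f q'|) :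
    (R.card : ℝ) ≤ 1 + 2 * L / δ := by
  classical
  have hmaps : ∀ q ∈ R, ⌊(f q + L) / δ⌋₊ ∈ Finset.range (⌊2 * L / δ⌋₊ + 1) := by
    intro q hq
    rw [Finset.mem_range, Nat.lt_succ_iff]
    apply Nat.floor_le_floor
    have := abs_le.mp (h1 q hq)
    gcongr; linarith
  have hinj : Set.InjOn (fun q => ⌊(f q + L) / δ⌋₊) R := by
    intro q hq q' hq' heq
    by_contra hne
    have h3 := h2 q hq q' hq' hne
    simp only at heq
    have p1 : 0 ≤ (f q + L) / δ := by have := abs_le.mp (h1 q hq); apply div_nonneg _ hδ.le; linarith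
    have p2 : 0 ≤ (f q' + L) / δ := by have := abs_le.mp (h1 q' hq'); apply div_nonneg _ hδ.le; linarith
    have a1 := Nat.floor_le p1
    have a2 := Nat.floor_le p2
    have b1 := Nat.lt_floor_add_one ((f q + L) / δ)
    have b2 := Nat.lt_floor_add_one ((f q' + L) / δ)
    rw [heq] at a1 b1
    have h4 : |(f q + L) / δ - (f q' + L) / δ| < 1 := by rw [abs_lt]; constructor <;> linarith
    rw [← sub_div, abs_div, abs_of_pos hδ, div_lt_one hδ] at h4
    have : f q + L - (f q' + L) = f q - f q' := by ring
    rw [this] at h4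
    linarith
  have hc := Finset.card_le_card_of_injOn _ hmaps hinj
  rw [Finset.card_range] at hc
  have h5 : ((⌊2 * L / δ⌋₊ : ℕ) : ℝ) ≤ 2 * L / δ := Nat.floor_le (by positivity)
  have h6 : (R.card : ℝ) ≤ (⌊2 * L / δ⌋₊ : ℝ) + 1 := by exact_mod_cast hc
  linarith

theorem rat_count (R : Finset ℚ) (X Y : ℝ) (p : ℕ) (hp : 0 < p) (hX : 0 < X) (hY : 0 < Y)
    (h1 : ∀ q ∈ R, |(q.num : ℝ)| ≤ X ∧ (q.den : ℝ) ≤ Y)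
    (h2 : ∀ q ∈ R, ∀ q' ∈ R, (p : ℤ) ∣ q.num * q'.den - q'.num * q.den) :
    (R.card : ℝ) ≤ 2 + 4 * X * Y / p := by
  classical
  have hp' : (0 : ℝ) < p := by exact_mod_cast hp
  have hbig : ∀ q ∈ R, ∀ q' ∈ R, q ≠ q' → (p : ℝ) ≤ |(q.num : ℝ) * q'.den - q'.num * q.den| := by
    intro q hq q' hq' hne
    have hnz : q.num * q'.den - q'.num * q.den ≠ 0 := by
      rw [sub_ne_zero]; intro h; exact hne (Rat.eq_iff_mul_eq_mul.mpr h)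
    have := Int.le_of_dvd (abs_pos.mpr hnz) ((dvd_abs _ _).mpr (h2 q hq q' hq'))
    exact_mod_cast this
  have hdpos : ∀ q : ℚ, (0 : ℝ) < q.den := fun q => by exact_mod_cast q.den_pos
  set R1 := R.filter (fun q => |(q.num : ℝ)| / q.den ≤ X / Y) with hR1
  set R2 := R.filter (fun q => ¬ |(q.num : ℝ)| / q.den ≤ X / Y) with hR2
  have hc : (R.card : ℝ) = R1.card + R2.card := by
    rw [hR1, hR2]; exact_mod_cast (Finset.card_filter_add_card_filter_not _).symm
  have c1 : (R1.card : ℝ) ≤ 1 + 2 * (X / Y) / (p / Y ^ 2) := by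
    refine spaced_count R1 (fun q => (q.num : ℝ) / q.den) _ _ (by positivity) (by positivity) ?_ ?_
    · intro q hq
      rw [abs_div, abs_of_pos (hdpos q)]
      exact (Finset.mem_filter.mp hq).2
    · intro q hq q' hq' hne
      have hq := (Finset.mem_filter.mp hq).1
      have hq' := (Finset.mem_filter.mp hq').1
      have d1 := hdpos q
      have d2 := hdpos q'
      rw [div_sub_div _ _ d1.ne' d2.ne', abs_div, abs_of_pos (mul_pos d1 d2)]
      have := hbig q hq q' hq' hne
      rw [mul_comm (q'.num : ℝ)] at this
      refine div_le_div₀ (abs_nonneg _) this (by positivity) ?_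
      rw [sq]
      exact mul_le_mul (h1 q hq).2 (h1 q' hq').2 d2.le hY.le
  have c2 : (R2.card : ℝ) ≤ 1 + 2 * (Y / X) / (p / X ^ 2) := by
    have hnz : ∀ q ∈ R2, 0 < |(q.num : ℝ)| := by
      intro q hq
      have := (Finset.mem_filter.mp hq).2
      push Not at this
      have h3 : 0 < |(q.num : ℝ)| / q.den := lt_trans (by positivity) this
      exact (div_pos_iff_of_pos_right (hdpos q)).mp h3
    refine spaced_count R2 (fun q => (q.den : ℝ) / q.num) _ _ (by positivity) (by positivity) ?_ ?_
    · intro q hq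
      have h3 := (Finset.mem_filter.mp hq).2
      push Not at h3
      rw [abs_div, abs_of_pos (hdpos q), div_le_div_iff₀ (hnz q hq) hX]
      rw [div_lt_div_iff₀ hY (hdpos q)] at h3
      linarith
    · intro q hq q' hq' hne
      have n1 := hnz q hq
      have n2 := hnz q' hq'
      have hq := (Finset.mem_filter.mp hq).1
      have hq' := (Finset.mem_filter.mp hq').1
      rw [div_sub_div _ _ (abs_pos.mp n1) (abs_pos.mp n2), abs_div, abs_mul]
      have := hbig q hq q' hq' hne
      have e : |(q.den : ℝ) * q'.num - q.num * q'.den| = |(q.num : ℝ) * q'.den - q'.num * q.den| := by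
        rw [abs_sub_comm]; congr 1; ring
      rw [e]
      refine div_le_div₀ (abs_nonneg _) this (by positivity) ?_
      rw [sq]
      exact mul_le_mul (h1 q hq).1 (h1 q' hq').1 n2.le hX.le
  have e1 : 2 * (X / Y) / (p / Y ^ 2) = 2 * X * Y / p := by field_simp
  have e2 : 2 * (Y / X) / (p / X ^ 2) = 2 * X * Y / p := by field_simp
  rw [e1] at c1
  rw [e2] at c2
  have e3 : 4 * X * Y / p = 2 * X * Y / p + 2 * X * Y / p := by ring
  rw [hc, e3]; linarith

theorem nu_bound {σ κ τ : Type} [DecidableEq σ] [DecidableEq κ] [Fintype τ] [DecidableEq τ] (S : Finset σ)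
    (ρ : σ → κ) (π : κ → τ) (H : ℝ) (hH : ∀ t, (((S.image ρ).filter (fun q => π q = t)).card : ℝ) ≤ H) :
    ∑ t : τ, ((S.filter (fun s => π (ρ s) = t)).card : ℝ) ^ 2 ≤
      H * (((S ×ˢ S).filter (fun ss => ρ ss.1 = ρ ss.2)).card : ℝ) := by
  have e1 : ∀ t, ((S.filter (fun s => π (ρ s) = t)).card : ℝ) =
      ∑ q ∈ (S.image ρ).filter (fun q => π q = t), ((S.filter (fun s => ρ s = q)).card : ℝ) := by
    intro t
    rw [Finset.card_eq_sum_card_fiberwise (f := ρ) (t := (S.image ρ).filter (fun q => π q = t))]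
    · push_cast
      refine Finset.sum_congr rfl fun q hq => ?_
      rw [Finset.mem_filter] at hq
      congr 2
      ext s
      simp only [Finset.mem_filter]
      constructor
      · rintro ⟨⟨h1, h2⟩, h3⟩; exact ⟨h1, h3⟩
      · rintro ⟨h1, h3⟩; exact ⟨⟨h1, by rw [h3]; exact hq.2⟩, h3⟩
    · intro s hs
      have hs := Finset.mem_filter.mp (Finset.mem_coe.mp hs)
      exact Finset.mem_coe.mpr (Finset.mem_filter.mpr ⟨Finset.mem_image_of_mem _ hs.1, hs.2⟩)
  have e2 : (((S ×ˢ S).filter (fun ss => ρ ss.1 = ρ ss.2)).card : ℝ) =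
      ∑ q ∈ S.image ρ, ((S.filter (fun s => ρ s = q)).card : ℝ) ^ 2 := by
    rw [Finset.card_eq_sum_card_fiberwise (f := fun ss => ρ ss.1) (t := S.image ρ)]
    · push_cast
      refine Finset.sum_congr rfl fun q hq => ?_
      rw [sq, ← Nat.cast_mul, ← Finset.card_product]
      congr 2
      ext ⟨s, s'⟩
      simp only [Finset.mem_filter, Finset.mem_product]
      constructor
      · rintro ⟨⟨⟨h1, h2⟩, h3⟩, h4⟩; exact ⟨⟨h1, h4⟩, ⟨h2, by rw [← h3]; exact h4⟩⟩
      · rintro ⟨⟨h1, h4⟩, ⟨h2, h5⟩⟩; exact ⟨⟨⟨h1, h2⟩, h4.trans h5.symm⟩, h4⟩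
    · intro s hs
      have hs := Finset.mem_filter.mp (Finset.mem_coe.mp hs)
      exact Finset.mem_coe.mpr (Finset.mem_image_of_mem _ (Finset.mem_product.mp hs.1).1)
  have e3 : ∀ t, ((S.filter (fun s => π (ρ s) = t)).card : ℝ) ^ 2 ≤
      H * ∑ q ∈ (S.image ρ).filter (fun q => π q = t), ((S.filter (fun s => ρ s = q)).card : ℝ) ^ 2 := by
    intro t
    rw [e1]
    refine sq_sum_le_card_mul_sum_sq.trans ?_
    exact mul_le_mul_of_nonneg_right (hH t) (Finset.sum_nonneg fun _ _ => by positivity)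
  refine (Finset.sum_le_sum fun t _ => e3 t).trans ?_
  rw [← Finset.mul_sum, e2, Finset.sum_fiberwise]

theorem sum_pow_card_le_aux {σ : Type} (S : Finset σ) (f : σ → ℝ) (hf : ∀ i ∈ S, 0 ≤ f i) (k : ℕ) :
    (∑ s ∈ S, f s) ^ (k + 1) ≤ (S.card : ℝ) ^ k * ∑ s ∈ S, f s ^ (k + 1) := by
  exact pow_sum_le_card_mul_sum_pow hf k

theorem holder_bound {σ τ : Type} [Fintype τ] [DecidableEq τ] (S : Finset σ) (x : σ → τ) (Z : τ → ℝ)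
    (hZ : ∀ t, 0 ≤ Z t) (r : ℕ) (hr : 1 ≤ r) :
    (∑ s ∈ S, Z (x s)) ^ (2 * r) ≤ (S.card : ℝ) ^ (2 * r - 2) *
      (∑ t : τ, ((S.filter (fun s => x s = t)).card : ℝ) ^ 2) * ∑ t : τ, Z t ^ (2 * r) := by
  obtain ⟨k, rfl⟩ : ∃ k, r = k + 1 := ⟨r - 1, by omega⟩
  have h1 : (∑ s ∈ S, Z (x s)) ^ (k + 1) ≤ (S.card : ℝ) ^ k * ∑ s ∈ S, Z (x s) ^ (k + 1) :=
    sum_pow_card_le_aux S (fun s => Z (x s)) (fun s _ => hZ _) k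
  have h2 : ∑ s ∈ S, Z (x s) ^ (k + 1) = ∑ t : τ, ((S.filter (fun s => x s = t)).card : ℝ) * Z t ^ (k + 1) := by
    rw [← Finset.sum_fiberwise S x]
    refine Finset.sum_congr rfl fun t _ => ?_
    rw [Finset.sum_congr rfl (g := fun _ => Z t ^ (k + 1)) (fun s hs => by rw [(Finset.mem_filter.mp hs).2]),
      Finset.sum_const, nsmul_eq_mul]
  have h3 := Finset.sum_mul_sq_le_sq_mul_sq Finset.univ (fun t : τ => ((S.filter (fun s => x s = t)).card : ℝ))
    (fun t => Z t ^ (k + 1))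
  rw [← h2] at h3
  have hnn : 0 ≤ ∑ s ∈ S, Z (x s) := Finset.sum_nonneg fun s _ => hZ _
  calc (∑ s ∈ S, Z (x s)) ^ (2 * (k + 1)) = ((∑ s ∈ S, Z (x s)) ^ (k + 1)) ^ 2 := by rw [← pow_mul]; congr 1; ring
    _ ≤ ((S.card : ℝ) ^ k * ∑ s ∈ S, Z (x s) ^ (k + 1)) ^ 2 := by
        refine pow_le_pow_left₀ (by positivity) h1 2
    _ = (S.card : ℝ) ^ (2 * (k + 1) - 2) * (∑ s ∈ S, Z (x s) ^ (k + 1)) ^ 2 := by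
        rw [mul_pow, ← pow_mul]; congr 2; omega
    _ ≤ (S.card : ℝ) ^ (2 * (k + 1) - 2) * ((∑ t : τ, ((S.filter (fun s => x s = t)).card : ℝ) ^ 2) *
          ∑ t : τ, (Z t ^ (k + 1)) ^ 2) := by gcongr
    _ = _ := by
        rw [← mul_assoc]
        congr 2
        funext t
        rw [← pow_mul]; congr 1; ring

theorem rhoQ_facts (a b : ℤ) (k : ℕ) (n : ℤ) (m u : ℕ) (hm : 0 < m) (hu : 0 < u) :
    (rhoQ a b k n m u).den ∣ m * u ∧ |(rhoQ a b k n m u).num| ≤ |a * k + b * m * n| ∧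
    (rhoQ a b k n m u).num * ((m * u : ℕ) : ℤ) = (a * k + b * m * n) * (rhoQ a b k n m u).den := by
  set A : ℤ := a * k + b * m * n with hA
  have hB : ((m * u : ℕ) : ℤ) ≠ 0 := by positivity
  have hq : rhoQ a b k n m u = Rat.divInt A ((m * u : ℕ) : ℤ) := by
    rw [Rat.divInt_eq_div]; unfold rhoQ; rw [← hA]; push_cast; rfl
  have h3 : (rhoQ a b k n m u).num * ((m * u : ℕ) : ℤ) = A * (rhoQ a b k n m u).den := by
    have h := Rat.num_div_den (rhoQ a b k n m u)
    have hd : ((rhoQ a b k n m u).den : ℚ) ≠ 0 := by exact_mod_cast (rhoQ a b k n m u).den_nz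
    have hB' : ((m * u : ℕ) : ℚ) ≠ 0 := by exact_mod_cast hB
    have h' : ((rhoQ a b k n m u).num : ℚ) / (rhoQ a b k n m u).den = (A : ℚ) / ((m * u : ℕ) : ℚ) := by
      rw [h]; rfl
    rw [div_eq_div_iff hd hB'] at h'
    exact_mod_cast h'
  refine ⟨?_, ?_, h3⟩
  · have := Rat.den_dvd A ((m * u : ℕ) : ℤ)
    rw [← hq] at this
    exact_mod_cast this
  · have hn := Rat.num_dvd A hB
    rw [← hq] at hn
    by_cases hA0 : A = 0
    · rw [hA0, zero_mul] at h3
      have : (rhoQ a b k n m u).num = 0 := (mul_eq_zero.mp h3).resolve_right hB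
      rw [this, hA0]
    · exact Int.le_of_dvd (abs_pos.mpr hA0) ((abs_dvd_abs _ _).mpr hn)



noncomputable def zfun (p : ℕ) [Fact p.Prime] (χ : MulChar (ZMod p) ℂ) (V : ℕ) (t : ZMod p × ZMod p) : ℝ :=
  ‖∑ v : Fin V, χ (t.1 + (((v : ℕ) + 1 : ℕ) : ZMod p)) * (starRingEnd ℂ) (χ (t.2 + (((v : ℕ) + 1 : ℕ) : ZMod p)))‖

def piQ (p : ℕ) [Fact p.Prime] (b : ℤ) (q : ℚ) : ZMod p := (q.num : ZMod p) / ((b : ZMod p) * (q.den : ZMod p))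

def piP (p : ℕ) [Fact p.Prime] (b : ℤ) (q : ℚ × ℚ) : ZMod p × ZMod p := (piQ p b q.1, piQ p b q.2)

theorem natCast_ne_zero_of_lt (p : ℕ) (n : ℕ) (h0 : 0 < n) (h1 : n < p) : (n : ZMod p) ≠ 0 := by
  rw [Ne, ZMod.natCast_eq_zero_iff]
  intro h; exact absurd (Nat.le_of_dvd h0 h) (by omega)

theorem rho_den_ne (p : ℕ) [Fact p.Prime] (a b : ℤ) (k : ℕ) (n : ℤ) (m u : ℕ) (hm : 0 < m) (hu : 0 < u)
    (hmp : m < p) (hup : u < p) : ((rhoQ a b k n m u).den : ZMod p) ≠ 0 := by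
  intro h
  rw [ZMod.natCast_eq_zero_iff] at h
  have h2 := h.trans (rhoQ_facts a b k n m u hm hu).1
  rcases (Fact.out : p.Prime).dvd_mul.mp h2 with h3 | h3
  · exact absurd (Nat.le_of_dvd hm h3) (by omega)
  · exact absurd (Nat.le_of_dvd hu h3) (by omega)

theorem piQ_rho (p : ℕ) [Fact p.Prime] (a b : ℤ) (hb : (b : ZMod p) ≠ 0) (k : ℕ) (n : ℤ) (m u : ℕ)
    (hm : 0 < m) (hu : 0 < u) (hmp : m < p) (hup : u < p) :
    (b : ZMod p) * m * u * piQ p b (rhoQ a b k n m u) = ((a * k + b * m * n : ℤ) : ZMod p) := by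
  have hd := rho_den_ne p a b k n m u hm hu hmp hup
  have h3 := (rhoQ_facts a b k n m u hm hu).2.2
  have h4 : ((rhoQ a b k n m u).num : ZMod p) * (m * u) =
      ((a * k + b * m * n : ℤ) : ZMod p) * (rhoQ a b k n m u).den := by
    have := congrArg (Int.cast : ℤ → ZMod p) h3
    push_cast at this ⊢
    exact this
  unfold piQ
  rw [← mul_div_assoc, div_eq_iff (mul_ne_zero hb hd)]
  linear_combination (b : ZMod p) * h4

theorem offdiag_bound (p : ℕ) [Fact p.Prime] (χ : MulChar (ZMod p) ℂ) (hχ : χ ≠ 1) (r : ℕ) (hr : 1 ≤ r)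
    (a b : ℤ) (ha : a ≠ 0) (hb : (b : ZMod p) ≠ 0) (K0 M0 U V B D : ℕ) (I : Finset ℤ)
    (hM : M0 < p) (hU : U < p) (hV : V < p) (hVr : V ^ r ≤ p)
    (hB : K0 * U * M0 * M0 * M0 ≤ B) (hD : ∀ n : ℕ, n ≠ 0 → n ≤ B → n.divisors.card ≤ D)
    (X Y : ℝ) (hX : 0 < X) (hY : 0 < Y) (hMU : (M0 : ℝ) * U ≤ Y)
    (hXb : ∀ k ∈ Finset.Icc 1 K0, ∀ m ∈ Finset.Icc 1 M0, ∀ n ∈ I, (|a * (k : ℤ) + b * m * n| : ℝ) ≤ X) :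
    (∑ s ∈ parS K0 M0 U I, zfun p χ V (piP p b (rhoP a b s))) ^ (2 * r) ≤
      ((K0 : ℝ) * U * M0 * M0 * I.card) ^ (2 * r - 2) *
      ((2 + 4 * X * Y / p) ^ 2 * ((D : ℝ) ^ 5 * (K0 * U * M0 * M0 * I.card))) *
      (((r : ℝ) ^ (2 * r) + 4 * r ^ 2) * (p : ℝ) ^ 3) := by
  classical
  have hp : 0 < p := (Fact.out : p.Prime).pos
  have hp' : (0 : ℝ) < p := by exact_mod_cast hp
  have hb0 : b ≠ 0 := by rintro rfl; simp at hb
  have hcardS : ((parS K0 M0 U I).card : ℝ) ≤ (K0 : ℝ) * U * M0 * M0 * I.card := by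
    have : (parS K0 M0 U I).card ≤ K0 * U * M0 * M0 * I.card := by
      unfold parS
      refine (Finset.card_filter_le _ _).trans ?_
      simp only [Finset.card_product, Nat.card_Icc, Nat.add_sub_cancel]
      apply le_of_eq; ring
    exact_mod_cast this
  have hmom : ∑ t : ZMod p × ZMod p, zfun p χ V t ^ (2 * r) ≤ ((r : ℝ) ^ (2 * r) + 4 * r ^ 2) * (p : ℝ) ^ 3 := by
    rw [Fintype.sum_prod_type]
    refine moment_bound p χ hχ r hr (Fin V) (fun v => (((v : ℕ) + 1 : ℕ) : ZMod p)) ?_ (by rwa [Fintype.card_fin])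
    intro v w h
    have h' := (ZMod.natCast_eq_natCast_iff' _ _ _).mp h
    rw [Nat.mod_eq_of_lt (by omega), Nat.mod_eq_of_lt (by omega)] at h'
    exact Fin.ext (by omega)
  have hH0 : 0 ≤ 2 + 4 * X * Y / p := by positivity
  -- properties of rationals in the image
  have hprop : ∀ q : ℚ, (∃ k ∈ Finset.Icc 1 K0, ∃ n ∈ I, ∃ m ∈ Finset.Icc 1 M0, ∃ u ∈ Finset.Icc 1 U,
      q = rhoQ a b k n m u) → |(q.num : ℝ)| ≤ X ∧ (q.den : ℝ) ≤ Y ∧ (q.den : ZMod p) ≠ 0 := by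
    rintro q ⟨k, hk, n, hn, m, hm, u, hu, rfl⟩
    have hm' := Finset.mem_Icc.mp hm
    have hu' := Finset.mem_Icc.mp hu
    obtain ⟨f1, f2, f3⟩ := rhoQ_facts a b k n m u hm'.1 hu'.1
    refine ⟨?_, ?_, rho_den_ne p a b k n m u hm'.1 hu'.1 (by omega) (by omega)⟩
    · refine le_trans ?_ (hXb k hk m hm n hn)
      exact_mod_cast f2
    · refine le_trans ?_ hMU
      have : (rhoQ a b k n m u).den ≤ M0 * U :=
        (Nat.le_of_dvd (Nat.mul_pos hm'.1 hu'.1) f1).trans (Nat.mul_le_mul hm'.2 hu'.2)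
      exact_mod_cast this
  have hcount : ∀ (R : Finset ℚ) (c : ZMod p), (∀ q ∈ R, (∃ k ∈ Finset.Icc 1 K0, ∃ n ∈ I, ∃ m ∈ Finset.Icc 1 M0,
      ∃ u ∈ Finset.Icc 1 U, q = rhoQ a b k n m u) ∧ piQ p b q = c) → (R.card : ℝ) ≤ 2 + 4 * X * Y / p := by
    intro R c hR
    refine rat_count R X Y p hp hX hY (fun q hq => ?_) ?_
    · have := hprop q (hR q hq).1; exact ⟨this.1, this.2.1⟩
    · intro q hq q' hq'
      have d1 := (hprop q (hR q hq).1).2.2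
      have d2 := (hprop q' (hR q' hq').1).2.2
      have e := (hR q hq).2.trans (hR q' hq').2.symm
      unfold piQ at e
      rw [div_eq_div_iff (mul_ne_zero hb d1) (mul_ne_zero hb d2)] at e
      rw [← ZMod.intCast_zmod_eq_zero_iff_dvd]
      push_cast
      apply mul_left_cancel₀ hb
      linear_combination e
  have hnu := nu_bound (parS K0 M0 U I) (rhoP a b) (piP p b) ((2 + 4 * X * Y / p) ^ 2) (by
    rintro ⟨c1, c2⟩
    set Q := ((parS K0 M0 U I).image (rhoP a b)).filter (fun q => piP p b q = (c1, c2)) with hQ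
    have hmem : ∀ q ∈ Q, ((∃ k ∈ Finset.Icc 1 K0, ∃ n ∈ I, ∃ m ∈ Finset.Icc 1 M0,
        ∃ u ∈ Finset.Icc 1 U, q.1 = rhoQ a b k n m u) ∧ piQ p b q.1 = c1) ∧
        ((∃ k ∈ Finset.Icc 1 K0, ∃ n ∈ I, ∃ m ∈ Finset.Icc 1 M0,
        ∃ u ∈ Finset.Icc 1 U, q.2 = rhoQ a b k n m u) ∧ piQ p b q.2 = c2) := by
      intro q hq
      rw [hQ, Finset.mem_filter, Finset.mem_image] at hq
      obtain ⟨⟨⟨k, n, m1, m2, u⟩, hs, rfl⟩, hpi⟩ := hq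
      simp only [piP, Prod.mk.injEq] at hpi
      simp only [parS, Finset.mem_filter, Finset.mem_product] at hs
      obtain ⟨⟨hk, hn, h1, h2, hu⟩, _⟩ := hs
      exact ⟨⟨⟨k, hk, n, hn, m1, h1, u, hu, rfl⟩, hpi.1⟩, ⟨⟨k, hk, n, hn, m2, h2, u, hu, rfl⟩, hpi.2⟩⟩
    have hsub : Q ⊆ Q.image Prod.fst ×ˢ Q.image Prod.snd := by
      intro q hq
      exact Finset.mem_product.mpr ⟨Finset.mem_image_of_mem _ hq, Finset.mem_image_of_mem _ hq⟩
    have i1 := hcount (Q.image Prod.fst) c1 (by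
      intro q hq
      obtain ⟨q', hq', rfl⟩ := Finset.mem_image.mp hq
      exact (hmem q' hq').1)
    have i2 := hcount (Q.image Prod.snd) c2 (by
      intro q hq
      obtain ⟨q', hq', rfl⟩ := Finset.mem_image.mp hq
      exact (hmem q' hq').2)
    have hc := Finset.card_le_card hsub
    rw [Finset.card_product] at hc
    calc (Q.card : ℝ) ≤ ((Q.image Prod.fst).card : ℝ) * (Q.image Prod.snd).card := by exact_mod_cast hc
      _ ≤ (2 + 4 * X * Y / p) * (2 + 4 * X * Y / p) := mul_le_mul i1 i2 (by positivity) hH0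
      _ = _ := by ring)
  have hen := energy_bound a b ha hb0 K0 M0 U B D I hB hD
  have hen' : ((((parS K0 M0 U I) ×ˢ (parS K0 M0 U I)).filter (fun ss => rhoP a b ss.1 = rhoP a b ss.2)).card : ℝ)
      ≤ (D : ℝ) ^ 5 * (K0 * U * M0 * M0 * I.card) := by exact_mod_cast hen
  refine (holder_bound (parS K0 M0 U I) (fun s => piP p b (rhoP a b s)) (zfun p χ V)
    (fun t => norm_nonneg _) r hr).trans ?_
  have hmn : 0 ≤ ∑ t : ZMod p × ZMod p, zfun p χ V t ^ (2 * r) :=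
    Finset.sum_nonneg fun t _ => pow_nonneg (norm_nonneg _) _
  have hnn : 0 ≤ ∑ t : ZMod p × ZMod p, (((parS K0 M0 U I).filter (fun s => piP p b (rhoP a b s) = t)).card : ℝ) ^ 2 :=
    Finset.sum_nonneg fun t _ => by positivity
  refine mul_le_mul (mul_le_mul (pow_le_pow_left₀ (by positivity) hcardS _) ?_ hnn (by positivity)) hmom hmn
    (by positivity)
  exact hnu.trans (mul_le_mul_of_nonneg_left hen' (by positivity))



theorem inner_bound (p : ℕ) [Fact p.Prime] (χ : MulChar (ZMod p) ℂ) (a b : ℤ) (hb : (b : ZMod p) ≠ 0)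
    (M0 U V : ℕ) (hM : M0 < p) (hU : U < p) (α : ℕ → ℂ) (hα : ∀ m, ‖α m‖ ≤ 1) (k : ℕ) (n : ℤ) (u : ℕ)
    (hu : u ∈ Icc 1 U) :
    ∑ v : Fin V, ‖∑ m ∈ Icc 1 M0, α m * χ ((a * k + b * m * (n + (u : ℤ) * ((v : ℕ) + 1 : ℕ)) : ℤ) : ZMod p)‖ ^ 2
      ≤ ∑ m1 ∈ Icc 1 M0, ∑ m2 ∈ Icc 1 M0, if m1 = m2 then (V : ℝ) else
          zfun p χ V (piP p b (rhoQ a b k n m1 u, rhoQ a b k n m2 u)) := by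
  rw [mem_Icc] at hu
  have key : ∀ m ∈ Icc 1 M0, ∀ v : Fin V,
      χ ((a * k + b * m * (n + (u : ℤ) * ((v : ℕ) + 1 : ℕ)) : ℤ) : ZMod p) =
      χ ((b : ZMod p) * m * u) * χ (piQ p b (rhoQ a b k n m u) + (((v : ℕ) + 1 : ℕ) : ZMod p)) := by
    intro m hm v
    rw [mem_Icc] at hm
    rw [← map_mul]
    congr 1
    have h := piQ_rho p a b hb k n m u (by omega) (by omega) (by omega) (by omega)
    push_cast at h ⊢
    linear_combination -h
  have e1 : ((∑ v : Fin V, ‖∑ m ∈ Icc 1 M0, α m * χ ((a * k + b * m * (n + (u : ℤ) * ((v : ℕ) + 1 : ℕ)) : ℤ) : ZMod p)‖ ^ 2 : ℝ) : ℂ)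
      = ∑ m1 ∈ Icc 1 M0, ∑ m2 ∈ Icc 1 M0, (α m1 * (starRingEnd ℂ) (α m2) * χ ((b : ZMod p) * m1 * u) *
        (starRingEnd ℂ) (χ ((b : ZMod p) * m2 * u))) *
        ∑ v : Fin V, χ (piQ p b (rhoQ a b k n m1 u) + (((v : ℕ) + 1 : ℕ) : ZMod p)) *
          (starRingEnd ℂ) (χ (piQ p b (rhoQ a b k n m2 u) + (((v : ℕ) + 1 : ℕ) : ZMod p))) := by
    simp_rw [mul_sum]
    have : ∀ m1 ∈ Icc 1 M0, (∑ m2 ∈ Icc 1 M0, ∑ v : Fin V, (α m1 * (starRingEnd ℂ) (α m2) * χ ((b : ZMod p) * m1 * u) *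
        (starRingEnd ℂ) (χ ((b : ZMod p) * m2 * u))) *
        (χ (piQ p b (rhoQ a b k n m1 u) + (((v : ℕ) + 1 : ℕ) : ZMod p)) *
          (starRingEnd ℂ) (χ (piQ p b (rhoQ a b k n m2 u) + (((v : ℕ) + 1 : ℕ) : ZMod p))))) = 
        ∑ v : Fin V, ∑ m2 ∈ Icc 1 M0, (α m1 * (starRingEnd ℂ) (α m2) * χ ((b : ZMod p) * m1 * u) *
        (starRingEnd ℂ) (χ ((b : ZMod p) * m2 * u))) *
        (χ (piQ p b (rhoQ a b k n m1 u) + (((v : ℕ) + 1 : ℕ) : ZMod p)) *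
          (starRingEnd ℂ) (χ (piQ p b (rhoQ a b k n m2 u) + (((v : ℕ) + 1 : ℕ) : ZMod p)))) :=
      fun m1 _ => sum_comm
    rw [sum_congr rfl this, sum_comm, Complex.ofReal_sum]
    refine sum_congr rfl fun v _ => ?_
    rw [Complex.ofReal_pow, ← Complex.mul_conj', map_sum, sum_mul_sum]
    refine sum_congr rfl fun m1 h1 => sum_congr rfl fun m2 h2 => ?_
    rw [key m1 h1 v, key m2 h2 v]
    simp only [map_mul]
    ring
  have e2 := congrArg norm e1
  rw [Complex.norm_real, Real.norm_of_nonneg (by positivity)] at e2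
  rw [e2]
  refine (norm_sum_le _ _).trans (sum_le_sum fun m1 h1 => (norm_sum_le _ _).trans (sum_le_sum fun m2 h2 => ?_))
  rw [norm_mul]
  have hc : ‖α m1 * (starRingEnd ℂ) (α m2) * χ ((b : ZMod p) * m1 * u) *
        (starRingEnd ℂ) (χ ((b : ZMod p) * m2 * u))‖ ≤ 1 := by
    rw [norm_mul, norm_mul, norm_mul, RCLike.norm_conj, RCLike.norm_conj]
    exact mul_le_one₀ (mul_le_one₀ (mul_le_one₀ (hα _) (norm_nonneg _) (hα _)) (norm_nonneg _) (char_norm_le p χ _))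
      (norm_nonneg _) (char_norm_le p χ _)
  refine (mul_le_of_le_one_left (norm_nonneg _) hc).trans ?_
  split_ifs with h
  · refine (norm_sum_le _ _).trans ?_
    refine (sum_le_sum (g := fun _ => (1 : ℝ)) fun v _ => ?_).trans (by simp)
    rw [norm_mul, RCLike.norm_conj]
    exact mul_le_one₀ (char_norm_le p χ _) (norm_nonneg _) (char_norm_le p χ _)
  · exact le_of_eq rfl

theorem sigma_bound (p : ℕ) [Fact p.Prime] (χ : MulChar (ZMod p) ℂ) (a b : ℤ) (hb : (b : ZMod p) ≠ 0)
    (K0 M0 N0 U V : ℕ) (hM : M0 < p) (hU : U < p) (α : ℕ → ℂ) (hα : ∀ m, ‖α m‖ ≤ 1) (I : Finset ℤ)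
    (hI : I = Finset.Icc (1 - (U : ℤ) * V) N0) :
    (U : ℝ) * V * ∑ k ∈ Icc 1 K0, ∑ n ∈ Icc 1 N0, ‖∑ m ∈ Icc 1 M0, α m * χ ((a * k + b * m * n : ℤ) : ZMod p)‖ ^ 2
      ≤ U * V * (K0 * M0 * I.card) + ∑ s ∈ parS K0 M0 U I, zfun p χ V (piP p b (rhoP a b s)) := by
  set F : ℕ → ℤ → ℝ := fun k n => ‖∑ m ∈ Icc 1 M0, α m * χ ((a * k + b * m * n : ℤ) : ZMod p)‖ ^ 2 with hF
  have hF0 : ∀ k n, 0 ≤ F k n := fun k n => by positivity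
  have shift : ∀ k, ∀ u ∈ Icc 1 U, ∀ v : Fin V, ∑ n ∈ Icc 1 N0, F k (n : ℕ) ≤
      ∑ n ∈ I, F k (n + (u : ℤ) * ((v : ℕ) + 1 : ℕ)) := by
    intro k u hu v
    rw [mem_Icc] at hu
    have hin : Set.InjOn (fun n : ℕ => (n : ℤ) - (u : ℤ) * ((v : ℕ) + 1 : ℕ)) (Icc 1 N0 : Finset ℕ) := by
      intro x _ y _ h
      simp only at h
      omega
    have : ∑ n ∈ Icc 1 N0, F k (n : ℕ) = ∑ n ∈ (Icc 1 N0).image (fun n : ℕ => (n : ℤ) - (u : ℤ) * ((v : ℕ) + 1 : ℕ)),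
        F k (n + (u : ℤ) * ((v : ℕ) + 1 : ℕ)) := by
      rw [sum_image hin]
      refine sum_congr rfl fun n _ => ?_
      rw [sub_add_cancel]
    rw [this]
    refine sum_le_sum_of_subset_of_nonneg ?_ fun _ _ _ => hF0 _ _
    intro x hx
    rw [mem_image] at hx
    obtain ⟨n, hn, rfl⟩ := hx
    rw [mem_Icc] at hn
    rw [hI, mem_Icc]
    have h1 : (u : ℤ) * ((v : ℕ) + 1 : ℕ) ≤ U * V := by
      have := v.2
      exact_mod_cast Nat.mul_le_mul hu.2 (by omega : (v : ℕ) + 1 ≤ V)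
    have h2 : 0 ≤ (u : ℤ) * ((v : ℕ) + 1 : ℕ) := by positivity
    constructor <;> omega
  have s1 : (U : ℝ) * V * ∑ k ∈ Icc 1 K0, ∑ n ∈ Icc 1 N0, F k (n : ℕ) ≤
      ∑ k ∈ Icc 1 K0, ∑ u ∈ Icc 1 U, ∑ v : Fin V, ∑ n ∈ I, F k (n + (u : ℤ) * ((v : ℕ) + 1 : ℕ)) := by
    rw [mul_sum]
    refine sum_le_sum fun k _ => ?_
    have : (U : ℝ) * V * ∑ n ∈ Icc 1 N0, F k (n : ℕ) = ∑ u ∈ Icc 1 U, ∑ v : Fin V, ∑ n ∈ Icc 1 N0, F k (n : ℕ) := by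
      simp [mul_assoc]
    rw [this]
    exact sum_le_sum fun u hu => sum_le_sum fun v _ => shift k u hu v
  refine s1.trans ?_
  have s2 : ∑ k ∈ Icc 1 K0, ∑ u ∈ Icc 1 U, ∑ v : Fin V, ∑ n ∈ I, F k (n + (u : ℤ) * ((v : ℕ) + 1 : ℕ)) ≤
      ∑ k ∈ Icc 1 K0, ∑ u ∈ Icc 1 U, ∑ n ∈ I, ∑ m1 ∈ Icc 1 M0, ∑ m2 ∈ Icc 1 M0, 
        ((if m1 = m2 then (V : ℝ) else 0) + if m1 ≠ m2 then
          zfun p χ V (piP p b (rhoQ a b k n m1 u, rhoQ a b k n m2 u)) else 0) := by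
    refine sum_le_sum fun k _ => sum_le_sum fun u hu => ?_
    rw [sum_comm]
    refine sum_le_sum fun n _ => (inner_bound p χ a b hb M0 U V hM hU α hα k n u hu).trans ?_
    refine sum_le_sum fun m1 _ => sum_le_sum fun m2 _ => ?_
    by_cases h : m1 = m2 <;> simp [h]
  refine s2.trans ?_
  simp_rw [sum_add_distrib]
  refine add_le_add ?_ ?_
  · simp only [sum_ite_eq]
    have : ∀ m1 ∈ Icc 1 M0, (if m1 ∈ Icc 1 M0 then (V : ℝ) else 0) = V := fun m1 h => if_pos h
    rw [sum_congr rfl fun k _ => sum_congr rfl fun u _ => sum_congr rfl fun n _ => sum_congr rfl this]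
    simp
    apply le_of_eq; ring
  · rw [parS, sum_filter]
    simp only [sum_product, rhoP]
    refine sum_le_sum fun k _ => ?_
    rw [sum_comm]
    refine sum_le_sum fun n _ => ?_
    rw [sum_comm]
    refine sum_le_sum fun m1 _ => ?_
    rw [sum_comm]



theorem tau_bound (r : ℕ) (hr : 2 ≤ r) (T G K M N p P U V L S D5 cr : ℝ) (hT : 0 ≤ T) (hG : 0 ≤ G)
    (hK : 1 < K) (hM : 1 < M) (hN : 1 < N) (hp : 1 < p) (hP : 1 ≤ P) (hPr : P ^ r = p) (hU : 1 ≤ U) (hV : 1 ≤ V)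
    (hL : 0 ≤ L) (hD5 : 0 ≤ D5) (hcr : 0 ≤ cr) (hS0 : 0 ≤ S) (hS : S ≤ 2 + 8 * L) (hPV : P ≤ 2 * V)
    (hUP : N ≤ 2 * (U * P)) (hGW : G ≤ 2 * (K * M ^ 2 * N) * U)
    (h : T ^ (2 * r) ≤ G ^ (2 * r - 2) * (S ^ 2 * (D5 * G)) * (cr * p ^ 3)) :
    (T / (U * V)) ^ (2 * r) ≤ (64 * 2 ^ (4 * r) * cr) * D5 * (1 + L) ^ 2 * (K * M ^ 2 * N) ^ (2 * r) *
      (p * P / (K * M ^ 2 * N ^ 2)) := by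
  set Z := K * M ^ 2 * N with hZ
  have hZ0 : 0 < Z := by positivity
  set W := 2 * Z * U with hW
  have hW0 : 0 < W := by positivity
  have hSq : S ^ 2 ≤ 64 * (1 + L) ^ 2 := by
    have : S ≤ 8 * (1 + L) := by linarith
    calc S ^ 2 ≤ (8 * (1 + L)) ^ 2 := by gcongr
      _ = _ := by ring
  have hp3 : p ^ 3 ≤ p * (2 * V) ^ (2 * r) := by
    calc p ^ 3 = p * P ^ (2 * r) := by rw [mul_comm 2 r, pow_mul, hPr]; ring
      _ ≤ _ := by gcongr
  have h1 : T ^ (2 * r) * W ≤ W ^ (2 * r) * (64 * (1 + L) ^ 2 * D5) * (cr * (p * (2 * V) ^ (2 * r))) := by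
    calc T ^ (2 * r) * W ≤ (G ^ (2 * r - 2) * (S ^ 2 * (D5 * G)) * (cr * p ^ 3)) * W := by gcongr
      _ ≤ (W ^ (2 * r - 2) * ((64 * (1 + L) ^ 2) * (D5 * W)) * (cr * (p * (2 * V) ^ (2 * r)))) * W := by gcongr
      _ = (W ^ (2 * r - 2) * W ^ 2) * (64 * (1 + L) ^ 2 * D5) * (cr * (p * (2 * V) ^ (2 * r))) := by ring
      _ = _ := by rw [← pow_add, show 2 * r - 2 + 2 = 2 * r by omega]
  have hUV : 0 < U * V := by positivity
  rw [div_pow, div_le_iff₀ (by positivity)]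
  have hWP : 1 ≤ W * (P / (Z * N)) := by
    rw [hW, mul_div_assoc', le_div_iff₀ (by positivity)]
    nlinarith
  have hfin : T ^ (2 * r) ≤ T ^ (2 * r) * (W * (P / (Z * N))) := le_mul_of_one_le_right (by positivity) hWP
  refine hfin.trans ?_
  calc T ^ (2 * r) * (W * (P / (Z * N))) = (T ^ (2 * r) * W) * (P / (Z * N)) := by ring
    _ ≤ (W ^ (2 * r) * (64 * (1 + L) ^ 2 * D5) * (cr * (p * (2 * V) ^ (2 * r)))) * (P / (Z * N)) := by
      gcongr
    _ = _ := by
      rw [hW, show 2 * Z * U = 2 * (Z * U) by ring, mul_pow 2 (Z * U), mul_pow Z U, mul_pow 2 V, mul_pow U V,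
        show 4 * r = 2 * r + 2 * r by ring, pow_add, show K * M ^ 2 * N ^ 2 = Z * N by rw [hZ]; ring]
      ring

theorem final_num (r : ℕ) (hr : 2 ≤ r) (ε : ℝ) (hε : 0 < ε) (S2 τ K M N p L Q C1 : ℝ)
    (hK : 1 < K) (hM : 1 < M) (hN : 1 < N) (hp : 1 < p) (hL : 0 ≤ L) (hQ : 0 ≤ Q) (hC1 : 0 ≤ C1)
    (hτ0 : 0 ≤ τ) (hS0 : 0 ≤ S2) (hS : S2 ≤ 2 * (K * M * N) + τ)
    (hτ : τ ^ (2 * r) ≤ C1 * p ^ (4 * r * ε) * (1 + L) ^ 2 * (K * M ^ 2 * N) ^ (2 * r) * Q) :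
    Real.sqrt S2 ≤ (C1 ^ ((1 : ℝ) / (4 * r)) + 2) * p ^ ε * (M * (N * K) ^ ((1 : ℝ) / 2)) *
      ((1 + K / M ^ 2) ^ ((1 : ℝ) / (4 * (r : ℝ))) * (1 + L) ^ ((1 : ℝ) / (2 * (r : ℝ))) *
        Q ^ ((1 : ℝ) / (4 * (r : ℝ))) + M ^ (-(1 : ℝ) / 2)) := by
  have hr0 : (0 : ℝ) < r := by positivity
  have hp0 : 0 < p := by linarith
  have a1 : Real.sqrt S2 ≤ Real.sqrt (2 * (K * M * N)) + Real.sqrt τ := by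
    refine (Real.sqrt_le_sqrt hS).trans ?_
    rw [Real.sqrt_le_left (by positivity)]
    rw [add_sq, Real.sq_sqrt (by positivity), Real.sq_sqrt hτ0]
    have : 0 ≤ 2 * √(2 * (K * M * N)) * √τ := by positivity
    linarith
  have a2 : Real.sqrt (2 * (K * M * N)) ≤ 2 * ((M * (N * K) ^ ((1 : ℝ) / 2)) * M ^ (-(1 : ℝ) / 2)) := by
    rw [Real.sqrt_le_left (by positivity)]
    rw [mul_pow, mul_pow, mul_pow, ← Real.sqrt_eq_rpow, Real.sq_sqrt (by positivity),
      ← Real.rpow_natCast (M ^ (-(1:ℝ)/2)), ← Real.rpow_mul (by positivity)]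
    norm_num
    rw [Real.rpow_neg_one]
    have : M ^ 2 * (N * K) * M⁻¹ = K * M * N := by field_simp
    rw [this]
    have : 0 < K * M * N := by positivity
    linarith
  have a3 : Real.sqrt τ ≤ C1 ^ ((1 : ℝ) / (4 * r)) * p ^ ε * (1 + L) ^ ((1 : ℝ) / (2 * (r : ℝ))) *
      (M * (N * K) ^ ((1 : ℝ) / 2)) * Q ^ ((1 : ℝ) / (4 * (r : ℝ))) := by
    have b1 : Real.sqrt τ = (τ ^ (2 * r)) ^ ((1 : ℝ) / (4 * r)) := by
      rw [Real.sqrt_eq_rpow, ← Real.rpow_natCast τ, ← Real.rpow_mul hτ0]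
      congr 1
      push_cast
      field_simp
      norm_num
    rw [b1]
    refine (Real.rpow_le_rpow (by positivity) hτ (by positivity)).trans (le_of_eq ?_)
    rw [Real.mul_rpow (by positivity) hQ, Real.mul_rpow (by positivity) (by positivity),
      Real.mul_rpow (by positivity) (by positivity), Real.mul_rpow (by positivity) (by positivity)]
    congr 1
    congr 1
    · congr 1
      · congr 1
        rw [← Real.rpow_mul hp0.le]
        congr 1
        field_simp
      · rw [← Real.rpow_natCast, ← Real.rpow_mul (by positivity)]
        congr 1
        push_cast
        field_simp
        norm_num
    · rw [← Real.rpow_natCast, ← Real.rpow_mul (by positivity),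
        show ((2 * r : ℕ) : ℝ) * (1 / (4 * r)) = 1 / 2 by push_cast; field_simp; norm_num,
        ← Real.sqrt_eq_rpow, ← Real.sqrt_eq_rpow, show K * M ^ 2 * N = M ^ 2 * (N * K) by ring,
        Real.sqrt_mul (by positivity), Real.sqrt_sq (by positivity)]
  have hpe : 1 ≤ p ^ ε := Real.one_le_rpow hp.le hε.le
  have hk : 1 ≤ (1 + K / M ^ 2) ^ ((1 : ℝ) / (4 * (r : ℝ))) := by
    apply Real.one_le_rpow _ (by positivity)
    have : 0 ≤ K / M ^ 2 := by positivity
    linarith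
  set A := (M * (N * K) ^ ((1 : ℝ) / 2)) with hA
  have hA0 : 0 < A := by positivity
  set B := (1 + L) ^ ((1 : ℝ) / (2 * (r : ℝ)))
  have hB0 : 0 ≤ B := by positivity
  set E := Q ^ ((1 : ℝ) / (4 * (r : ℝ)))
  have hE0 : 0 ≤ E := by positivity
  set H := M ^ (-(1 : ℝ) / 2)
  have hH0 : 0 ≤ H := by positivity
  set c := C1 ^ ((1 : ℝ) / (4 * r))
  have hc0 : 0 ≤ c := by positivity
  set kk := (1 + K / M ^ 2) ^ ((1 : ℝ) / (4 * (r : ℝ)))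
  set pe := p ^ ε
  calc √S2 ≤ 2 * (A * H) + c * pe * B * A * E := by linarith
    _ ≤ 2 * (A * H) * pe + c * pe * B * A * E * kk := by
      refine add_le_add ?_ ?_
      · exact le_mul_of_one_le_right (by positivity) hpe
      · exact le_mul_of_one_le_right (by positivity) hk
    _ ≤ (2 * (A * H) * pe + c * pe * B * A * E * kk) + (2 * pe * A * kk * B * E + c * pe * A * H) := by
      have : 0 ≤ 2 * pe * A * kk * B * E + c * pe * A * H := by positivity
      linarith
    _ = _ := by ring



theorem cs_bound (K0 M0 N0 : ℕ) (α : ℕ → ℂ) (β : ℕ → ℕ → ℂ) (f : ℕ → ℕ → ℕ → ℂ) :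
    ‖∑ k ∈ Icc 1 K0, ∑ m ∈ Icc 1 M0, ∑ n ∈ Icc 1 N0, α m * β k n * f k m n‖ ≤
      (∑ k ∈ Icc 1 K0, ∑ n ∈ Icc 1 N0, ‖β k n‖ ^ 2) ^ ((1 : ℝ) / 2) *
      Real.sqrt (∑ k ∈ Icc 1 K0, ∑ n ∈ Icc 1 N0, ‖∑ m ∈ Icc 1 M0, α m * f k m n‖ ^ 2) := by
  rw [← Real.sqrt_eq_rpow]
  have e : ∑ k ∈ Icc 1 K0, ∑ m ∈ Icc 1 M0, ∑ n ∈ Icc 1 N0, α m * β k n * f k m n =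
      ∑ x ∈ Icc 1 K0 ×ˢ Icc 1 N0, β x.1 x.2 * ∑ m ∈ Icc 1 M0, α m * f x.1 m x.2 := by
    rw [sum_product]
    refine sum_congr rfl fun k _ => ?_
    rw [sum_comm]
    refine sum_congr rfl fun n _ => ?_
    rw [mul_sum]
    exact sum_congr rfl fun m _ => by ring
  rw [e, ← sum_product', ← sum_product']
  refine (norm_sum_le _ _).trans ?_
  simp_rw [norm_mul]
  exact Real.sum_mul_le_sqrt_mul_sqrt _ _ _

set_option maxHeartbeats 2000000
/-- Theorem 2.5 (Type II trilinear character sum bound). -/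
theorem trilinear_typeII (r : ℕ) (hr : 2 ≤ r) (ε : ℝ) (hε : 0 < ε) :
    ∃ C : ℝ, 0 < C ∧ ∀ (p : ℕ), p.Prime →
      ∀ (K M N : ℝ), 1 < K → (K : ℝ) < p → 1 < M → (M : ℝ) < p → 1 < N → (N : ℝ) < p →
      N > 4 * (p : ℝ) ^ ((1 : ℝ) / (r : ℝ)) →
      ∀ (a b : ℤ), ¬ ((p : ℤ) ∣ a * b) →
      ∀ (χ : MulChar (ZMod p) ℂ), χ ≠ 1 →
      ∀ (α : ℕ → ℂ), (∀ m, ‖α m‖ ≤ 1) →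
      ∀ (β : ℕ → ℕ → ℂ),
      ‖∑ k ∈ Icc 1 ⌊K⌋₊, ∑ m ∈ Icc 1 ⌊M⌋₊, ∑ n ∈ Icc 1 ⌊N⌋₊,
          α m * β k n * χ ((a * k + b * m * n : ℤ) : ZMod p)‖ ≤
        C * (p : ℝ) ^ ε *
          (∑ k ∈ Icc 1 ⌊K⌋₊, ∑ n ∈ Icc 1 ⌊N⌋₊, ‖β k n‖ ^ 2) ^ ((1 : ℝ) / 2) *
          (M * (N * K) ^ ((1 : ℝ) / 2)) *
          ((1 + K / M ^ 2) ^ ((1 : ℝ) / (4 * (r : ℝ))) *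
            (1 + ((|a| : ℝ) * K + (|b| : ℝ) * M * N) * M * N *
              (p : ℝ) ^ (-1 - 1 / (r : ℝ) : ℝ)) ^ ((1 : ℝ) / (2 * (r : ℝ))) *
            ((p : ℝ) ^ (1 + 1 / (r : ℝ) : ℝ) / (K * M ^ 2 * N ^ 2)) ^ ((1 : ℝ) / (4 * (r : ℝ))) +
            M ^ (-(1 : ℝ) / 2)) := by
  set ε' : ℝ := 4 * r * ε / 25 with hε'
  have hr0 : (0 : ℝ) < r := by positivity
  have hε'0 : 0 < ε' := by positivity
  obtain ⟨Cd, hCd1, hCd⟩ := divisor_bound ε' hε'0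
  set cr : ℝ := (r : ℝ) ^ (2 * r) + 4 * r ^ 2 with hcr
  have hcr0 : 0 ≤ cr := by positivity
  set C1 : ℝ := 64 * 2 ^ (4 * r) * cr * Cd ^ 5 with hC1
  have hC10 : 0 ≤ C1 := by positivity
  refine ⟨C1 ^ ((1 : ℝ) / (4 * r)) + 2, by positivity, ?_⟩
  intro p hp K M N hK hKp hM hMp hN hNp hNP a b hab χ hχ α hα β
  haveI : Fact p.Prime := ⟨hp⟩
  have ha : a ≠ 0 := by rintro rfl; simp at hab
  have hb : (b : ZMod p) ≠ 0 := by
    rw [Ne, ZMod.intCast_zmod_eq_zero_iff_dvd]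
    exact fun h => hab (h.mul_left a)
  have hp1 : (1 : ℝ) < p := by exact_mod_cast hp.one_lt
  have hp0 : (0 : ℝ) < p := by linarith
  set P : ℝ := (p : ℝ) ^ ((1 : ℝ) / (r : ℝ)) with hPdef
  have hP1 : 1 ≤ P := Real.one_le_rpow hp1.le (by positivity)
  have hPr : P ^ r = p := by
    rw [hPdef, ← Real.rpow_natCast, ← Real.rpow_mul hp0.le, one_div, inv_mul_cancel₀ hr0.ne', Real.rpow_one]
  have hpP : (p : ℝ) ^ (1 + 1 / (r : ℝ) : ℝ) = p * P := by
    rw [Real.rpow_add hp0, Real.rpow_one]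
  have hpPi : (p : ℝ) ^ (-1 - 1 / (r : ℝ) : ℝ) = (p * P)⁻¹ := by
    rw [← hpP, ← Real.rpow_neg hp0.le]; congr 1; ring
  set V := ⌊P⌋₊ with hV
  set K0 := ⌊K⌋₊ with hK0
  set M0 := ⌊M⌋₊ with hM0
  set N0 := ⌊N⌋₊ with hN0
  have hV1 : 1 ≤ V := Nat.le_floor (by simpa using hP1)
  have hVP : (V : ℝ) ≤ P := Nat.floor_le (by linarith)
  have hPV1 : P < V + 1 := Nat.lt_floor_add_one P
  have hV1' : (1 : ℝ) ≤ V := by exact_mod_cast hV1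
  have hPV : P ≤ 2 * V := by linarith
  have hK0K : (K0 : ℝ) ≤ K := Nat.floor_le (by linarith)
  have hM0M : (M0 : ℝ) ≤ M := Nat.floor_le (by linarith)
  have hN0N : (N0 : ℝ) ≤ N := Nat.floor_le (by linarith)
  have hN0N1 : N < N0 + 1 := Nat.lt_floor_add_one N
  have hK0p : K0 < p := by exact_mod_cast hK0K.trans_lt hKp
  have hM0p : M0 < p := by exact_mod_cast hM0M.trans_lt hMp
  have hN0p : N0 < p := by exact_mod_cast hN0N.trans_lt hNp
  have hVp : V < p := by
    have : (V : ℝ) < p := by linarith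
    exact_mod_cast this
  have hVr : V ^ r ≤ p := by
    have : (V : ℝ) ^ r ≤ p := by rw [← hPr]; gcongr
    exact_mod_cast this
  have hVN : V ≤ N0 := Nat.le_floor (by linarith)
  set U := N0 / V with hU
  have hU1 : 1 ≤ U := (Nat.one_le_div_iff (by omega)).2 hVN
  have hU1' : (1 : ℝ) ≤ U := by exact_mod_cast hU1
  have hUV : U * V ≤ N0 := Nat.div_mul_le_self N0 V
  have hUV' : (U : ℝ) * V ≤ N0 := by exact_mod_cast hUV
  have hUV2 : (N0 : ℝ) < U * V + V := by
    have := Nat.lt_div_mul_add (a := N0) (b := V) (by omega)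
    exact_mod_cast this
  have hUN : U ≤ N0 := Nat.div_le_self _ _
  have hUp : U < p := by omega
  have hNUP : N ≤ 2 * (U * P) := by
    have : (U : ℝ) * V ≤ U * P := by gcongr
    linarith
  have hUP2 : (U : ℝ) * P ≤ 2 * N := by
    have : (U : ℝ) * P ≤ U * (2 * V) := by gcongr
    linarith
  set I := Finset.Icc (1 - (U : ℤ) * V) N0 with hI
  have hIc : (I.card : ℝ) ≤ 2 * N := by
    have : I.card = N0 + U * V := by
      rw [hI, Int.card_Icc]
      have : (N0 : ℤ) + 1 - (1 - (U : ℤ) * V) = ((N0 + U * V : ℕ) : ℤ) := by push_cast; ring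
      rw [this, Int.toNat_natCast]
    rw [this]; push_cast; linarith
  set X : ℝ := (|a| : ℝ) * K + (|b| : ℝ) * M * N with hX
  have ha' : (0 : ℝ) < |(a : ℝ)| := abs_pos.2 (by exact_mod_cast ha)
  have hX0 : 0 < X := by positivity
  set Dr : ℝ := Cd * (((p : ℝ) ^ 5) ^ ε') with hDr
  have hDr0 : 0 ≤ Dr := by positivity
  set D := ⌊Dr⌋₊ with hD
  have hD' : ∀ n : ℕ, n ≠ 0 → n ≤ p ^ 5 → n.divisors.card ≤ D := by
    intro n hn hnp
    refine Nat.le_floor ((hCd n hn).trans ?_)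
    have : (n : ℝ) ≤ (p : ℝ) ^ 5 := by exact_mod_cast hnp
    rw [hDr]; gcongr
  have hD5 : (D : ℝ) ^ 5 ≤ Cd ^ 5 * (p : ℝ) ^ (4 * r * ε) := by
    have h1 : (D : ℝ) ≤ Dr := Nat.floor_le hDr0
    have h2 : Dr ^ 5 = Cd ^ 5 * (p : ℝ) ^ (4 * r * ε) := by
      rw [hDr, mul_pow, ← Real.rpow_natCast (p : ℝ) 5, ← Real.rpow_mul hp0.le, ← Real.rpow_natCast _ 5,
        ← Real.rpow_natCast _ 5, ← Real.rpow_mul hp0.le]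
      congr 2
      rw [hε']; push_cast; ring
    rw [← h2]; gcongr
  have hB : K0 * U * M0 * M0 * M0 ≤ p ^ 5 := by
    calc K0 * U * M0 * M0 * M0 ≤ p * p * p * p * p := by gcongr
      _ = p ^ 5 := by ring
  have hXb : ∀ k ∈ Icc 1 K0, ∀ m ∈ Icc 1 M0, ∀ n ∈ I, (|a * (k : ℤ) + b * m * n| : ℝ) ≤ X := by
    intro k hk m hm n hn
    rw [mem_Icc] at hk hm
    rw [hI, mem_Icc] at hn
    have hk' : (k : ℝ) ≤ K := le_trans (by exact_mod_cast hk.2) hK0K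
    have hm' : (m : ℝ) ≤ M := le_trans (by exact_mod_cast hm.2) hM0M
    have hn' : |(n : ℝ)| ≤ N := by
      have : |n| ≤ (N0 : ℤ) := by
        have : (U : ℤ) * V ≤ N0 := by exact_mod_cast hUV
        rw [abs_le]; constructor <;> linarith
      exact le_trans (by exact_mod_cast this) hN0N
    refine (abs_add_le _ _).trans ?_
    rw [hX]
    refine add_le_add ?_ ?_
    · rw [abs_mul]
      simp only [Int.cast_natCast, Nat.abs_cast]
      gcongr
    · rw [abs_mul, abs_mul]
      simp only [Int.cast_natCast, Nat.abs_cast]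
      gcongr
  set T := ∑ s ∈ parS K0 M0 U I, zfun p χ V (piP p b (rhoP a b s)) with hT
  have hT0 : 0 ≤ T := sum_nonneg fun s _ => norm_nonneg _
  have hoff := offdiag_bound p χ hχ r (by omega) a b ha hb K0 M0 U V (p ^ 5) D I hM0p hUp hVp hVr hB hD' X (M * U)
    hX0 (by positivity) (by gcongr) hXb
  have hsig := sigma_bound p χ a b hb K0 M0 N0 U V hM0p hUp α hα I hI
  set S2 := ∑ k ∈ Icc 1 K0, ∑ n ∈ Icc 1 N0, ‖∑ m ∈ Icc 1 M0, α m * χ ((a * k + b * m * n : ℤ) : ZMod p)‖ ^ 2 with hS2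
  have hS20 : 0 ≤ S2 := by positivity
  rw [hpPi, hpP]
  set L : ℝ := X * M * N * (p * P)⁻¹ with hL
  have hL0 : 0 ≤ L := by positivity
  have hSS : 2 + 4 * X * (M * U) / p ≤ 2 + 8 * L := by
    have : X * (M * U) / p ≤ 2 * L := by
      rw [hL, div_le_iff₀ hp0]
      have e : 2 * (X * M * N * (p * P)⁻¹) * p = X * M * (2 * N) / P := by field_simp
      rw [e, le_div_iff₀ (by positivity)]
      calc X * (M * U) * P = X * M * (U * P) := by ring
        _ ≤ _ := by gcongr
    have e2 : 4 * X * (M * U) / p = 4 * (X * (M * U) / p) := by ring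
    rw [e2]; linarith
  have htau := tau_bound r hr T ((K0 : ℝ) * U * M0 * M0 * I.card) K M N p P U V L (2 + 4 * X * (M * U) / p)
    ((D : ℝ) ^ 5) cr hT0 (by positivity) hK hM hN hp1 hP1 hPr hU1' hV1' hL0 (by positivity) hcr0 (by positivity)
    hSS hPV hNUP (by
      calc (K0 : ℝ) * U * M0 * M0 * I.card ≤ K * U * M * M * (2 * N) := by gcongr
        _ = _ := by ring) hoff
  set Q : ℝ := p * P / (K * M ^ 2 * N ^ 2) with hQ
  have hQ0 : 0 ≤ Q := by positivity
  have htau2 : (T / (U * V)) ^ (2 * r) ≤ C1 * (p : ℝ) ^ (4 * r * ε) * (1 + L) ^ 2 * (K * M ^ 2 * N) ^ (2 * r) * Q := by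
    refine htau.trans ?_
    calc _ ≤ (64 * 2 ^ (4 * r) * cr) * (Cd ^ 5 * (p : ℝ) ^ (4 * r * ε)) * (1 + L) ^ 2 * (K * M ^ 2 * N) ^ (2 * r) * Q := by
          gcongr
      _ = _ := by rw [hC1]; ring
  have hUV0 : (0 : ℝ) < U * V := by positivity
  have hS2b : S2 ≤ 2 * (K * M * N) + T / (U * V) := by
    have h1 : S2 ≤ K0 * M0 * I.card + T / (U * V) := by
      rw [← sub_le_iff_le_add', le_div_iff₀ hUV0]
      linarith
    have h2 : (K0 : ℝ) * M0 * I.card ≤ 2 * (K * M * N) := by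
      calc (K0 : ℝ) * M0 * I.card ≤ K * M * (2 * N) := by gcongr
        _ = _ := by ring
    linarith
  have hfin := final_num r hr ε hε S2 (T / (U * V)) K M N p L Q C1 hK hM hN hp1 hL0 hQ0 hC10 (by positivity) hS20 hS2b htau2
  have hcs := cs_bound K0 M0 N0 α β (fun k m n => χ ((a * k + b * m * n : ℤ) : ZMod p))
  refine hcs.trans ((mul_le_mul_of_nonneg_left hfin (by positivity)).trans (le_of_eq ?_))
  ring
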